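/- arXiv:2208.03807 — 3 statements merged into one kernel-verified Lean document; each statement's English description precedes it below -/
import Mathlib

section
/- For every rational α ∈ (0,1], Nakada's α-continued fraction map T_α has bounded non-full range: there is a full cylinder Δ_α(ε₀,d₀) such that for every endpoint e of every non-full cylinder of T_α and every integer n ≥ 0, T_αⁿ(e) does not lie in the interior of Δ_α(ε₀,d₀). -/
/-!
The endpoints of the non-full cylinders are rational numbers in `[-1, 1]` with bounded denominators:
a cylinder with a large digit is full (`full_pos`, `full_neg`), and the endpoints of a cylinder with
digit `d` are among `α`, `α - 1`, `±1/(d + α)`, `±1/(d - 1 + α)` (`endpoints_pos`, `endpoints_neg`).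

The map does not increase denominators on `[-1, 1]`: if `x = a/b` with `0 < |a| ≤ b`, then
`T x = b/|a| - k` has denominator at most `|a| ≤ b` (`BddDen.nakadaT`). So all the orbits in
question consist of rationals with denominator at most some `N`. The nonzero ones among them satisfy
`|x| ≥ 1/N`, so they never meet a cylinder `Δ(1, d₀)` with `d₀` large, and such a cylinder is full.
-/

open MeasureTheory Set

noncomputable section

/-- Nakada's `α`-continued fraction map on `[α-1, α)`:
`T_α(0) = 0` and `T_α(x) = |1/x| - ⌊|1/x| + 1 - α⌋` for `x ≠ 0`. -/
def nakadaT (α : ℝ) (x : ℝ) : ℝ :=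
  if x = 0 then 0 else |1 / x| - ⌊|1 / x| + 1 - α⌋

/-- The sign `ε(x)`: `+1` if `x > 0`, `-1` if `x < 0`. -/
def epsN (x : ℝ) : ℤ := if 0 < x then 1 else -1

/-- The digit `d_α(x) = ⌊|1/x| + 1 - α⌋`. -/
def dN (α x : ℝ) : ℤ := ⌊|1 / x| + 1 - α⌋

/-- The cylinder `Δ_α(ε,d)` of points of `[α-1, α) ∖ {0}` with digit `(ε,d)`. -/
def cylN (α : ℝ) (ε d : ℤ) : Set ℝ :=
  {x | x ∈ Set.Ico (α - 1) α ∧ x ≠ 0 ∧ epsN x = ε ∧ dN α x = d}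

/-- The cylinder `Δ_α(ε,d)` is full when its image under `T_α` is all of `[α-1, α)`. -/
def IsFullCylN (α : ℝ) (ε d : ℤ) : Prop :=
  nakadaT α '' cylN α ε d = Set.Ico (α - 1) α

/-- `T_α` has bounded non-full range: there is a full cylinder `Δ_α(ε₀,d₀)` such that
the forward `T_α`-orbit of every endpoint of every non-full cylinder avoids its
interior. -/
def BddNonFullRangeN (α : ℝ) : Prop :=
  ∃ ε₀ d₀ : ℤ, IsFullCylN α ε₀ d₀ ∧
    ∀ ε d : ℤ, (cylN α ε d).Nonempty → ¬ IsFullCylN α ε d →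
      ∀ e : ℝ, (e = sInf (cylN α ε d) ∨ e = sSup (cylN α ε d)) →
        ∀ n : ℕ, (nakadaT α)^[n] e ∉ interior (cylN α ε₀ d₀)

/-- The Gauss map `G(x) = 1/x - ⌊1/x⌋`, `G(0) = 0`. -/
def gaussMap (x : ℝ) : ℝ := if x = 0 then 0 else 1 / x - ⌊1 / x⌋

/-- `x` is a rational number in `[-1, 1]` with a (not necessarily reduced) denominator at
most `N`. -/
def BddDen (N : ℤ) (x : ℝ) : Prop :=
  |x| ≤ 1 ∧ ∃ a b : ℤ, 0 < b ∧ b ≤ N ∧ x = a / b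

lemma nakadaT_mem {α x : ℝ} (hx : x ≠ 0) : nakadaT α x ∈ Set.Ico (α - 1) α := by
  rw [nakadaT, if_neg hx]
  have h1 := Int.floor_le (|1 / x| + 1 - α)
  have h2 := Int.lt_floor_add_one (|1 / x| + 1 - α)
  constructor <;> linarith

lemma BddDen.nakadaT {N : ℤ} {α x : ℝ} (h0 : 0 < α) (h1 : α ≤ 1) (hx : BddDen N x) :
    BddDen N (nakadaT α x) := by
  by_cases hx0 : x = 0
  · have : _root_.nakadaT α x = x := by simp [_root_.nakadaT, hx0]
    rwa [this]
  have hm := nakadaT_mem (α := α) hx0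
  refine ⟨abs_le.2 ⟨by linarith [hm.1], by linarith [hm.2]⟩, ?_⟩
  obtain ⟨hle, a, b, hb, hbN, rfl⟩ := hx
  have hbR : (0 : ℝ) < b := by exact_mod_cast hb
  have ha : a ≠ 0 := by
    rintro rfl
    simp at hx0
  have haR : (0 : ℝ) < |(a : ℝ)| := by simpa using ha
  have hab : |a| ≤ b := by
    rw [abs_div, abs_of_pos hbR, div_le_one hbR] at hle
    exact_mod_cast hle
  refine ⟨b - ⌊|1 / ((a : ℝ) / b)| + 1 - α⌋ * |a|, |a|, by positivity, hab.trans hbN, ?_⟩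
  rw [_root_.nakadaT, if_neg hx0]
  generalize ⌊|1 / ((a : ℝ) / b)| + 1 - α⌋ = k
  rw [one_div_div, abs_div, abs_of_pos hbR]
  push_cast
  field_simp

lemma BddDen.iterate {N : ℤ} {α x : ℝ} (h0 : 0 < α) (h1 : α ≤ 1) (hx : BddDen N x) (n : ℕ) :
    BddDen N ((_root_.nakadaT α)^[n] x) := by
  induction n with
  | zero => exact hx
  | succ n ih =>
    rw [Function.iterate_succ_apply']
    exact ih.nakadaT h0 h1

lemma BddDen.inv_le {N : ℤ} {x : ℝ} (hx : BddDen N x) (hpos : 0 < x) : 1 / x ≤ N := by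
  obtain ⟨-, a, b, hb, hbN, rfl⟩ := hx
  have hbR : (0 : ℝ) < b := by exact_mod_cast hb
  have hbN' : (b : ℝ) ≤ N := by exact_mod_cast hbN
  have haR : (0 : ℝ) < a := by
    by_contra! h
    exact absurd hpos (not_lt.2 (div_nonpos_of_nonpos_of_nonneg h hbR.le))
  have ha1 : (1 : ℝ) ≤ a := by exact_mod_cast (Int.cast_pos.1 haR : 0 < a)
  rw [one_div_div]
  exact (div_le_self hbR.le ha1).trans hbN'

/-- A cylinder is full as soon as every inverse-branch value `ε/(d + y)` lies in the domain. -/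
lemma full_of_mem {α : ℝ} {ε d : ℤ} (hε : ε = 1 ∨ ε = -1)
    (h : ∀ y ∈ Set.Ico (α - 1) α, 0 < d + y ∧ (ε : ℝ) / (d + y) ∈ Set.Ico (α - 1) α) :
    IsFullCylN α ε d := by
  refine Set.Subset.antisymm ?_ ?_
  · rintro _ ⟨x, hx, rfl⟩
    exact nakadaT_mem hx.2.1
  · intro y hy
    obtain ⟨hp, hm⟩ := h y hy
    have habs : |1 / ((ε : ℝ) / (d + y))| = d + y := by
      rcases hε with rfl | rfl <;> simp [abs_div, abs_of_pos hp, -neg_add_rev]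
    have hfl : ⌊|1 / ((ε : ℝ) / (d + y))| + 1 - α⌋ = d := by
      rw [habs, Int.floor_eq_iff]
      constructor <;> linarith [hy.1, hy.2]
    have hne : (ε : ℝ) / (d + y) ≠ 0 := by
      rcases hε with rfl | rfl <;> simp [hp.ne', -neg_add_rev]
    refine ⟨(ε : ℝ) / (d + y), ⟨hm, hne, ?_, hfl⟩, ?_⟩
    · rcases hε with rfl | rfl
      · simp [epsN, hp]
      · have : ¬ (0 : ℝ) < ((-1 : ℤ) : ℝ) / (d + y) := by
          push_cast
          exact not_lt.2 (div_nonpos_of_nonpos_of_nonneg (by norm_num) hp.le)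
        rw [epsN, if_neg this]
    · rw [nakadaT, if_neg hne, hfl, habs]
      ring

lemma full_pos {α : ℝ} {d : ℤ} (h0 : 0 < α) (h1 : α ≤ 1) (hd : 1 / α + 1 < d) :
    IsFullCylN α 1 d := by
  refine full_of_mem (Or.inl rfl) fun y hy => ?_
  have hi : 0 < 1 / α := by positivity
  have hp : 1 / α < d + y := by linarith [hy.1]
  have hp0 : 0 < d + y := hi.trans hp
  refine ⟨hp0, ?_, ?_⟩
  · have : 0 < ((1 : ℤ) : ℝ) / (d + y) := by push_cast; positivity
    linarith
  · push_cast
    rwa [one_div_lt hp0 h0]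

lemma full_neg {α : ℝ} {d : ℤ} (h0 : 0 < α) (h1 : α < 1) (hd : 1 / (1 - α) + 1 < d) :
    IsFullCylN α (-1) d := by
  refine full_of_mem (Or.inr rfl) fun y hy => ?_
  have h1' : 0 < 1 - α := by linarith
  have hi : 0 < 1 / (1 - α) := by positivity
  have hp : 1 / (1 - α) < d + y := by linarith [hy.1]
  have hp0 : 0 < d + y := hi.trans hp
  have hlt : 1 / (d + y) < 1 - α := by rwa [one_div_lt hp0 h1']
  have hpos : 0 < 1 / (d + y) := by positivity
  push_cast
  rw [neg_div]
  refine ⟨hp0, ?_, ?_⟩ <;> linarith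

lemma digit_pos {α x : ℝ} {ε d : ℤ} (h0 : 0 < α) (h1 : α ≤ 1) (hx : x ∈ cylN α ε d) :
    1 ≤ d := by
  obtain ⟨⟨hl, hu⟩, hne, -, rfl⟩ := hx
  rw [dN, Int.le_floor]
  have habs : |x| ≤ 1 := abs_le.2 ⟨by linarith, by linarith⟩
  have : 1 ≤ |1 / x| := by
    rw [abs_div, abs_one]
    exact one_le_one_div (abs_pos.2 hne) habs
  push_cast
  linarith

lemma cylN_pos_eq {α : ℝ} {d : ℤ} (h0 : 0 < α) (h1 : α ≤ 1) (hd : 1 ≤ d) :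
    cylN α 1 d = Set.Ioc (1 / (d + α)) (1 / (d - 1 + α)) ∩ Set.Iio α := by
  have hdR : (1 : ℝ) ≤ d := by exact_mod_cast hd
  have hA : 0 < d + α := by linarith
  have hB : 0 < d - 1 + α := by linarith
  ext x
  simp only [cylN, Set.mem_ofPred_eq, Set.mem_inter_iff, Set.mem_Ioc, Set.mem_Ico, Set.mem_Iio]
  have key : 0 < x →
      (dN α x = d ↔ 1 / (d + α) < x ∧ x ≤ 1 / (d - 1 + α)) := by
    intro hx
    rw [dN, Int.floor_eq_iff, abs_of_pos (by positivity), one_div_lt hA hx, le_one_div hx hB]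
    constructor <;> rintro ⟨h, h'⟩ <;> constructor <;> linarith
  constructor
  · rintro ⟨⟨-, hu⟩, hne, he, hdx⟩
    have hx : 0 < x := by
      by_contra h
      simp [epsN, h] at he
    exact ⟨(key hx).1 hdx, hu⟩
  · rintro ⟨hI, hu⟩
    have hx : 0 < x := lt_trans (by positivity) hI.1
    exact ⟨⟨by linarith, hu⟩, hx.ne', by simp [epsN, hx], (key hx).2 hI⟩

lemma cylN_neg_eq {α : ℝ} {d : ℤ} (h0 : 0 < α) (hd : 1 ≤ d) :
    cylN α (-1) d = Set.Ico (max (α - 1) (-(1 / (d - 1 + α)))) (-(1 / (d + α))) := by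
  have hdR : (1 : ℝ) ≤ d := by exact_mod_cast hd
  have hA : 0 < d + α := by linarith
  have hB : 0 < d - 1 + α := by linarith
  ext x
  simp only [cylN, Set.mem_ofPred_eq, Set.mem_Ico, max_le_iff]
  have key : x < 0 →
      (dN α x = d ↔ -(1 / (d - 1 + α)) ≤ x ∧ x < -(1 / (d + α))) := by
    intro hx
    have hx' : 0 < -x := by linarith
    have e : |1 / x| = 1 / (-x) := by
      rw [abs_div, abs_one, abs_of_neg hx]
    rw [dN, Int.floor_eq_iff, e, neg_le, lt_neg, one_div_lt hA hx', le_one_div hx' hB]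
    constructor <;> rintro ⟨h, h'⟩ <;> constructor <;> linarith
  constructor
  · rintro ⟨⟨hl, -⟩, hne, he, hdx⟩
    have hx : x < 0 := by
      by_contra! h
      have : 0 < x := lt_of_le_of_ne h hne.symm
      simp [epsN, this] at he
    have := (key hx).1 hdx
    exact ⟨⟨hl, this.1⟩, this.2⟩
  · rintro ⟨⟨hl, hI⟩, hu⟩
    have hx : x < 0 := lt_trans hu (by simp only [neg_lt_zero]; positivity)
    exact ⟨⟨hl, by linarith⟩, hx.ne, by simp [epsN, hx.le], (key hx).2 ⟨hI, hu⟩⟩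

lemma endpoints_pos {α e : ℝ} {d : ℤ} (h0 : 0 < α) (h1 : α ≤ 1) (hd : 1 ≤ d)
    (hne : (cylN α 1 d).Nonempty) (he : e = sInf (cylN α 1 d) ∨ e = sSup (cylN α 1 d)) :
    e = α ∨ e = 1 / (d + α) ∨ e = 1 / (d - 1 + α) := by
  rw [cylN_pos_eq h0 h1 hd] at hne he
  rcases le_or_gt α (1 / (d - 1 + α)) with h | h
  · have hs : Set.Ioc (1 / (d + α)) (1 / (d - 1 + α)) ∩ Set.Iio α
        = Set.Ioo (1 / (d + α)) α := by
      ext x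
      simp only [Set.mem_inter_iff, Set.mem_Ioc, Set.mem_Iio, Set.mem_Ioo]
      exact ⟨fun H => ⟨H.1.1, H.2⟩, fun H => ⟨⟨H.1, H.2.le.trans h⟩, H.2⟩⟩
    rw [hs] at hne he
    have hlt := Set.nonempty_Ioo.1 hne
    rw [csInf_Ioo hlt, csSup_Ioo hlt] at he
    tauto
  · have hs : Set.Ioc (1 / (d + α)) (1 / (d - 1 + α)) ∩ Set.Iio α
        = Set.Ioc (1 / (d + α)) (1 / (d - 1 + α)) :=
      Set.inter_eq_left.2 fun x hx => lt_of_le_of_lt hx.2 h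
    rw [hs] at hne he
    have hlt := Set.nonempty_Ioc.1 hne
    rw [csInf_Ioc hlt, csSup_Ioc hlt] at he
    tauto

lemma endpoints_neg {α e : ℝ} {d : ℤ} (h0 : 0 < α) (hd : 1 ≤ d)
    (hne : (cylN α (-1) d).Nonempty)
    (he : e = sInf (cylN α (-1) d) ∨ e = sSup (cylN α (-1) d)) :
    e = α - 1 ∨ e = -(1 / (d + α)) ∨ e = -(1 / (d - 1 + α)) := by
  rw [cylN_neg_eq h0 hd] at hne he
  have hlt := Set.nonempty_Ico.1 hne
  rw [csInf_Ico hlt, csSup_Ico hlt] at he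
  rcases max_choice (α - 1) (-(1 / (d - 1 + α))) with h | h <;> rw [h] at he <;> tauto

/-- Endpoints of cylinders stay in `[-1, 1]`, being limits of points of the domain. -/
lemma abs_endpoint_le {α e : ℝ} {ε d : ℤ} (h0 : 0 < α) (h1 : α ≤ 1)
    (hne : (cylN α ε d).Nonempty) (he : e = sInf (cylN α ε d) ∨ e = sSup (cylN α ε d)) :
    |e| ≤ 1 := by
  have hsub : cylN α ε d ⊆ Set.Icc (-1) 1 := fun x hx =>
    ⟨by linarith [hx.1.1], by linarith [hx.1.2]⟩
  have hcl : e ∈ closure (cylN α ε d) := by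
    rcases he with rfl | rfl
    · exact csInf_mem_closure hne (bddBelow_Icc.mono hsub)
    · exact csSup_mem_closure hne (bddAbove_Icc.mono hsub)
  exact abs_le.2 (closure_minimal hsub isClosed_Icc hcl)

/-- For `α = p/q`, the endpoints of a cylinder with digit `d ≤ D` have denominators at most
`(D + 1) q`. -/
lemma bddDen_endpoint {p q D d : ℤ} {α e : ℝ} {ε : ℤ} (hq : 0 < q) (hα : α = p / q)
    (h0 : 0 < α) (h1 : α ≤ 1) (hdD : d ≤ D) (hε : ε = 1 ∨ ε = -1)
    (hne : (cylN α ε d).Nonempty) (he : e = sInf (cylN α ε d) ∨ e = sSup (cylN α ε d)) :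
    BddDen ((D + 1) * q) e := by
  have hd : 1 ≤ d := digit_pos h0 h1 hne.some_mem
  refine ⟨abs_endpoint_le h0 h1 hne he, ?_⟩
  have hqR : (0 : ℝ) < q := by exact_mod_cast hq
  have hp : 0 < p := by
    rw [hα, div_pos_iff_of_pos_right hqR] at h0
    exact_mod_cast h0
  have hpR : (0 : ℝ) < p := by exact_mod_cast hp
  have hpq : p ≤ q := by
    rw [hα, div_le_one hqR] at h1
    exact_mod_cast h1
  have hdR : (1 : ℝ) ≤ d := by exact_mod_cast hd
  have hqN : q ≤ (D + 1) * q := by nlinarith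
  have hA : 0 < d * q + p := by positivity
  have hAN : d * q + p ≤ (D + 1) * q := by nlinarith
  have hB : 0 < (d - 1) * q + p := by nlinarith
  have hBN : (d - 1) * q + p ≤ (D + 1) * q := by nlinarith
  have eA : 1 / (d + α) = q / (d * q + p) := by
    rw [hα]; field_simp
  have eB : 1 / (d - 1 + α) = q / ((d - 1) * q + p) := by
    rw [hα]; field_simp
  rcases hε with rfl | rfl
  · rcases endpoints_pos h0 h1 hd hne he with h | h | h
    · exact ⟨p, q, hq, hqN, by rw [h, hα]⟩
    · exact ⟨q, _, hA, hAN, by rw [h, eA]; push_cast; rfl⟩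
    · exact ⟨q, _, hB, hBN, by rw [h, eB]; push_cast; rfl⟩
  · rcases endpoints_neg h0 hd hne he with h | h | h
    · exact ⟨p - q, q, hq, hqN, by rw [h, hα]; push_cast; field_simp⟩
    · exact ⟨-q, _, hA, hAN, by rw [h, eA]; push_cast; rw [neg_div]⟩
    · exact ⟨-q, _, hB, hBN, by rw [h, eB]; push_cast; rw [neg_div]⟩

/-- Only finitely many digits occur in non-empty non-full cylinders. -/
lemma digit_le_of_not_full {α : ℝ} {ε d : ℤ} (h0 : 0 < α) (h1 : α ≤ 1)
    (hε : ε = 1 ∨ ε = -1) (hne : (cylN α ε d).Nonempty) (hf : ¬ IsFullCylN α ε d) :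
    d ≤ ⌈1 / α + 1 / (1 - α) + 1⌉ := by
  by_contra! hd
  rw [Int.ceil_lt_iff] at hd
  -- At `α = 1` the second summand is `1 / 0 = 0`.
  have hnn : 0 ≤ 1 / (1 - α) := one_div_nonneg.2 (by linarith)
  have hnp : 0 < 1 / α := by positivity
  rcases hε with rfl | rfl
  · exact hf (full_pos h0 h1 (by linarith))
  · rcases h1.lt_or_eq with h | rfl
    · exact hf (full_neg h0 h (by linarith))
    · obtain ⟨x, hx, hx0, he, -⟩ := hne
      have : 0 < x := lt_of_le_of_ne (by linarith [hx.1]) hx0.symm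
      simp [epsN, this] at he

/-- For every rational `α ∈ (0,1]`, Nakada's `α`-continued fraction
map has bounded non-full range. -/
theorem stmt2 (α : ℝ) (hα : α ∈ Set.Ioc (0 : ℝ) 1) (hrat : ∃ q : ℚ, (q : ℝ) = α) :
    BddNonFullRangeN α := by
  obtain ⟨h0, h1⟩ := hα
  obtain ⟨r, rfl⟩ := hrat
  generalize hD : ⌈1 / (r : ℝ) + 1 / (1 - (r : ℝ)) + 1⌉ = D
  generalize hN : (D + 1) * (r.den : ℤ) = N
  refine ⟨1, max (N + 2) (⌈1 / (r : ℝ)⌉ + 2), full_pos h0 h1 ?_, ?_⟩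
  · have := Int.le_ceil (1 / (r : ℝ))
    push_cast
    exact lt_of_lt_of_le (by linarith) (le_max_right _ _)
  intro ε d hne hf e he n hmem
  have hε : ε = 1 ∨ ε = -1 := by
    obtain ⟨x, -, -, hx, -⟩ := hne
    rw [← hx, epsN]
    split_ifs <;> simp
  have hdD : d ≤ D := hD ▸ digit_le_of_not_full h0 h1 hε hne hf
  have hgood : BddDen N e := hN ▸ bddDen_endpoint (p := r.num) (q := (r.den : ℤ))
    (by exact_mod_cast r.den_pos) (by rw [Int.cast_natCast]; exact Rat.cast_def r) h0 h1 hdD hε hne he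
  have hg := hgood.iterate h0 h1 n
  generalize (nakadaT (r : ℝ))^[n] e = x at hmem hg
  obtain ⟨-, -, hs, hdx⟩ := interior_subset hmem
  have hx : 0 < x := by
    by_contra h
    simp [epsN, h] at hs
  -- A positive `x` with denominator at most `N` has digit at most `N + 1`.
  have hinv := hg.inv_le hx
  have hle : N + 2 ≤ dN r x := hdx ▸ le_max_left _ _
  rw [dN, Int.le_floor, abs_of_pos (by positivity)] at hle
  push_cast at hle
  linarith
end
end

section
/- For every α ∈ (0,1], there exists a Borel probability measure ν_α on [α−1, α), mutually absolutely continuous with Lebesgue measure on [α−1, α), such that Nakada's α-continued fraction map T_α preserves ν_α and is ergodic with respect to ν_α. -/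
/-!
Push Lebesgue measure on `I α = [α-1, α)` forward by the iterates of `T = nakadaT α` and follow the
image branch by branch. The branch contributions always have the form `(q + r x)⁻² dx` on an
interval `J ⊆ I α`, with `0 ≤ r ≤ q` and `0 < q`; such data form a `Piece`, the inverse branches
`V d` turn a piece into its children, and the transfer operator `P` sums a function over the
children (`Piece.integ_comp`).

A complete piece (`J = I α`) has bounded distortion: the condition `r ≤ q` alone makes its density
comparable to its mass (`Piece.S_le_mass_of_full`). Incomplete pieces are the difficulty, since `T`
need not be uniformly expanding and its Markov partition may be infinite. Only children whose
cylinder is cut by an end of `J` are incomplete, so a piece has at most one child cut off on the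
left and at most one cut off on the right. Let `S` be the supremum of the density relative to
`dx / (1 + x)`. Passing to a child multiplies `S` by at most `α / (1 + α)` on positive branches, by
at most `1 - α` on negative ones, and by at most `1 / 5` on all branches but the first of either
sign. Weight `S` by `1` for pieces reaching up to `α` and by `3/2` for the others, which allows for
the creation of two incomplete children from a single piece: the total weighted bound `Ψ` of the
incomplete children is at most `θ α = 1 - α² / 10` times the weighted bound of the parent
(`Piece.P_Ψ_le`).

Two consequences carry the theorem.

* The images of Lebesgue measure `m` are uniformly dominated by a multiple of `m`
  (`Piece.volume_preimage_le`). The limit of their Cesàro averages along an ultrafilter is then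
  countably additive, hence an invariant probability measure `ν ≪ m`
  (`exists_invariant_of_bounded`).
* If `T⁻¹ A ⊆ A` and `m A > 0`, then `A` fills a fixed proportion of every complete piece, and
  since the incomplete part dies out geometrically, of every piece (`Piece.low_bound`), in
  particular of every interval. By Lebesgue's density theorem `A` has full measure
  (`zero_or_full`). This gives ergodicity. Applied to the union of all preimages of a `ν`-null set,
  it also gives `m ≪ ν`.
-/

open MeasureTheory Set

noncomputable section

namespace NakadaCF

open Filter Topology
open scoped ENNReal

/-! ### Invariant measures from uniformly bounded push-forwards -/

section Existence

variable {X : Type*} [MeasurableSpace X]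

/-- The Cesàro averages `(1/(n+1)) ∑_{k ≤ n} m (T⁻ᵏ A)`. -/
def cesaro (m : Measure X) (T : X → X) (A : Set X) (n : ℕ) : ℝ≥0∞ :=
  ((n : ℝ≥0∞) + 1)⁻¹ * ∑ k ∈ Finset.range (n + 1), m (T^[k] ⁻¹' A)

/-- The limit of the Cesàro averages along a fixed nonprincipal ultrafilter. It exists for every
set `A` because `ℝ≥0∞` is compact. -/
def cesaroLim (m : Measure X) (T : X → X) (A : Set X) : ℝ≥0∞ :=
  ((hyperfilter ℕ).map (cesaro m T A)).lim

lemma tendsto_cesaro (m : Measure X) (T : X → X) (A : Set X) :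
    Tendsto (cesaro m T A) (hyperfilter ℕ : Filter ℕ) (𝓝 (cesaroLim m T A)) :=
  Ultrafilter.le_nhds_lim ((hyperfilter ℕ).map (cesaro m T A))

lemma natCast_add_one_inv_mul (n : ℕ) : ((n : ℝ≥0∞) + 1)⁻¹ * ((n : ℝ≥0∞) + 1) = 1 :=
  ENNReal.inv_mul_cancel (by positivity) (by finiteness)

lemma cesaro_le_of_forall {m : Measure X} {T : X → X} {A : Set X} {b : ℝ≥0∞}
    (h : ∀ k, m (T^[k] ⁻¹' A) ≤ b) (n : ℕ) : cesaro m T A n ≤ b := by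
  unfold cesaro
  calc ((n : ℝ≥0∞) + 1)⁻¹ * ∑ k ∈ Finset.range (n + 1), m (T^[k] ⁻¹' A)
      ≤ ((n : ℝ≥0∞) + 1)⁻¹ * ∑ k ∈ Finset.range (n + 1), b := by
        gcongr with k hk; exact h k
    _ = ((n : ℝ≥0∞) + 1)⁻¹ * ((n : ℝ≥0∞) + 1) * b := by
        simp [mul_assoc]
    _ = b := by rw [natCast_add_one_inv_mul, one_mul]

lemma cesaroLim_le {m : Measure X} {T : X → X} {A : Set X} {b : ℝ≥0∞}
    (h : ∀ k, m (T^[k] ⁻¹' A) ≤ b) : cesaroLim m T A ≤ b :=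
  le_of_tendsto (tendsto_cesaro m T A) (Eventually.of_forall (cesaro_le_of_forall h))

lemma cesaroLim_union {m : Measure X} {T : X → X} (hT : Measurable T) {A B : Set X}
    (hAB : Disjoint A B) (hB : MeasurableSet B) :
    cesaroLim m T (A ∪ B) = cesaroLim m T A + cesaroLim m T B := by
  have h : cesaro m T (A ∪ B) = fun n => cesaro m T A n + cesaro m T B n := by
    funext n
    simp only [cesaro, ← mul_add, ← Finset.sum_add_distrib]
    congr 1
    refine Finset.sum_congr rfl fun k _ => ?_
    rw [preimage_union, measure_union (hAB.preimage _) ((hT.iterate k) hB)]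
  have h1 := tendsto_cesaro m T (A ∪ B)
  rw [h] at h1
  exact tendsto_nhds_unique h1 ((tendsto_cesaro m T A).add (tendsto_cesaro m T B))

lemma cesaroLim_empty (m : Measure X) (T : X → X) : cesaroLim m T ∅ = 0 :=
  le_antisymm (cesaroLim_le (by simp)) bot_le

lemma cesaroLim_biUnion {m : Measure X} {T : X → X} (hT : Measurable T) {f : ℕ → Set X}
    (hf : ∀ i, MeasurableSet (f i)) (hd : Pairwise (Function.onFun Disjoint f)) (n : ℕ) :
    cesaroLim m T (⋃ i ∈ Finset.range n, f i) = ∑ i ∈ Finset.range n, cesaroLim m T (f i) := by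
  induction n with
  | zero => simp [cesaroLim_empty]
  | succ n ih =>
    rw [Finset.sum_range_succ, ← ih, Finset.range_add_one, Finset.set_biUnion_insert, union_comm]
    refine cesaroLim_union hT ?_ (hf n)
    simp only [disjoint_iUnion_left, Finset.mem_range]
    intro i hi
    exact hd hi.ne

lemma cesaroLim_mono {m : Measure X} {T : X → X} {A B : Set X} (h : A ⊆ B) :
    cesaroLim m T A ≤ cesaroLim m T B := by
  refine le_of_tendsto_of_tendsto (tendsto_cesaro m T A) (tendsto_cesaro m T B)
    (Eventually.of_forall fun n => ?_)
  unfold cesaro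
  gcongr

/-- Domination by a finite measure upgrades finite additivity to countable additivity. -/
lemma cesaroLim_iUnion {m : Measure X} [IsFiniteMeasure m] {T : X → X} (hT : Measurable T)
    {C : ℝ≥0∞} (hC : C ≠ ∞) (hb : ∀ A, MeasurableSet A → ∀ n, m (T^[n] ⁻¹' A) ≤ C * m A)
    {f : ℕ → Set X} (hf : ∀ i, MeasurableSet (f i)) (hd : Pairwise (Function.onFun Disjoint f)) :
    cesaroLim m T (⋃ i, f i) = ∑' i, cesaroLim m T (f i) := by
  apply le_antisymm
  · have key : ∀ n, cesaroLim m T (⋃ i, f i)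
        ≤ (∑' i, cesaroLim m T (f i)) + C * m (⋃ i, ⋃ (_ : i ≥ n), f i) := by
      intro n
      have hsplit : (⋃ i, f i) = (⋃ i ∈ Finset.range n, f i) ∪ ⋃ i, ⋃ (_ : i ≥ n), f i := by
        ext x
        simp only [mem_iUnion, mem_union, Finset.mem_range, exists_prop]
        constructor
        · rintro ⟨i, hi⟩
          rcases lt_or_ge i n with h | h
          · exact Or.inl ⟨i, h, hi⟩
          · exact Or.inr ⟨i, h, hi⟩
        · rintro (⟨i, _, hi⟩ | ⟨i, _, hi⟩) <;> exact ⟨i, hi⟩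
      have hm : MeasurableSet (⋃ i, ⋃ (_ : i ≥ n), f i) :=
        MeasurableSet.iUnion fun i => MeasurableSet.iUnion fun _ => hf i
      rw [hsplit, cesaroLim_union hT ?_ hm, cesaroLim_biUnion hT hf hd]
      · gcongr
        · exact ENNReal.sum_le_tsum _
        · exact cesaroLim_le (hb _ hm)
      · simp only [disjoint_iUnion_left, disjoint_iUnion_right, Finset.mem_range]
        intro i hi j hj
        exact hd (by omega)
    have h0 := tendsto_measure_biUnion_Ici_zero_of_pairwise_disjoint (μ := m)
      (fun i => (hf i).nullMeasurableSet) hd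
    have h1 : Tendsto (fun n => (∑' i, cesaroLim m T (f i)) + C * m (⋃ i, ⋃ (_ : i ≥ n), f i))
        atTop (𝓝 ((∑' i, cesaroLim m T (f i)) + C * 0)) :=
      tendsto_const_nhds.add (ENNReal.Tendsto.const_mul h0 (Or.inr hC))
    simpa using ge_of_tendsto' h1 key
  · rw [ENNReal.tsum_eq_iSup_nat]
    refine iSup_le fun n => ?_
    rw [← cesaroLim_biUnion hT hf hd]
    exact cesaroLim_mono (iUnion₂_subset fun i _ => subset_iUnion f i)

lemma cesaroLim_preimage (m : Measure X) [IsProbabilityMeasure m] (T : X → X) (A : Set X) :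
    cesaroLim m T (T ⁻¹' A) = cesaroLim m T A := by
  have hs : ∀ n, ∑ k ∈ Finset.range (n + 1), m (T^[k] ⁻¹' (T ⁻¹' A)) + m A
      = ∑ k ∈ Finset.range (n + 1), m (T^[k] ⁻¹' A) + m (T^[n + 1] ⁻¹' A) := by
    intro n
    rw [← Finset.sum_range_succ, Finset.sum_range_succ' _ (n + 1)]
    simp only [← preimage_comp, ← Function.iterate_succ', Function.iterate_zero, preimage_id]
  have hl : Tendsto (fun n : ℕ => ((n : ℝ≥0∞) + 1)⁻¹) (hyperfilter ℕ : Filter ℕ) (𝓝 0) := by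
    have := (ENNReal.tendsto_inv_nat_nhds_zero.comp (tendsto_add_atTop_nat 1))
    refine (this.mono_left ?_).congr (by simp)
    exact Nat.hyperfilter_le_atTop
  have hl' : ∀ B, Tendsto (fun n : ℕ => cesaro m T B n + ((n : ℝ≥0∞) + 1)⁻¹)
      (hyperfilter ℕ : Filter ℕ) (𝓝 (cesaroLim m T B)) := fun B => by
    simpa using (tendsto_cesaro m T B).add hl
  apply le_antisymm
  · refine le_of_tendsto_of_tendsto' (tendsto_cesaro m T _) (hl' A) fun n => ?_
    unfold cesaro
    calc _ ≤ ((n : ℝ≥0∞) + 1)⁻¹ *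
          (∑ k ∈ Finset.range (n + 1), m (T^[k] ⁻¹' A) + m (T^[n + 1] ⁻¹' A)) := by
            gcongr; rw [← hs]; exact le_self_add
      _ ≤ ((n : ℝ≥0∞) + 1)⁻¹ * (∑ k ∈ Finset.range (n + 1), m (T^[k] ⁻¹' A) + 1) := by
            gcongr; exact prob_le_one
      _ = _ := by rw [mul_add, mul_one]
  · refine le_of_tendsto_of_tendsto' (tendsto_cesaro m T _) (hl' _) fun n => ?_
    unfold cesaro
    calc _ ≤ ((n : ℝ≥0∞) + 1)⁻¹ *
          (∑ k ∈ Finset.range (n + 1), m (T^[k] ⁻¹' (T ⁻¹' A)) + m A) := by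
            gcongr; rw [hs]; exact le_self_add
      _ ≤ ((n : ℝ≥0∞) + 1)⁻¹ * (∑ k ∈ Finset.range (n + 1), m (T^[k] ⁻¹' (T ⁻¹' A)) + 1) := by
            gcongr; exact prob_le_one
      _ = _ := by rw [mul_add, mul_one]

/-- If all push-forwards of a probability measure `m` under the iterates of `T` are dominated by
one multiple of `m`, then `T` has an invariant probability measure absolutely continuous with
respect to `m`. -/
lemma exists_invariant_of_bounded (m : Measure X) [IsProbabilityMeasure m] {T : X → X}
    (hT : Measurable T) {C : ℝ≥0∞} (hC : C ≠ ∞)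
    (hb : ∀ A, MeasurableSet A → ∀ n, m (T^[n] ⁻¹' A) ≤ C * m A) :
    ∃ ν : Measure X, IsProbabilityMeasure ν ∧ ν ≪ m ∧ MeasurePreserving T ν ν := by
  let ν : Measure X := Measure.ofMeasurable (fun A _ => cesaroLim m T A) (cesaroLim_empty m T)
    (fun f hf hd => cesaroLim_iUnion hT hC hb hf hd)
  have hν : ∀ A, MeasurableSet A → ν A = cesaroLim m T A := fun A hA =>
    Measure.ofMeasurable_apply A hA
  refine ⟨ν, ⟨?_⟩, ?_, hT, ?_⟩
  · rw [hν _ MeasurableSet.univ]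
    have h : cesaro m T univ = fun _ => 1 := by
      funext n
      simp [cesaro, natCast_add_one_inv_mul]
    have h1 := tendsto_cesaro m T univ
    rw [h] at h1
    exact tendsto_nhds_unique h1 tendsto_const_nhds
  · refine Measure.AbsolutelyContinuous.mk fun A hA h0 => ?_
    rw [hν A hA]
    refine le_antisymm (cesaroLim_le fun k => ?_) bot_le
    simpa [h0] using hb A hA k
  · ext A hA
    rw [Measure.map_apply hT hA, hν _ (hT hA), hν _ hA, cesaroLim_preimage]

end Existence

/-! ### The map and its inverse branches -/

/-- The domain `[α-1, α)`. -/
def I (α : ℝ) : Set ℝ := Ico (α - 1) α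

lemma ordConnected_I (α : ℝ) : (I α).OrdConnected := ordConnected_Ico

/-- Index set of the inverse branches. `(true, k)` is the digit `k + 1` on positive points and
`(false, k)` the digit `k + 2` on negative points; digit `1` never occurs on negative points. -/
abbrev Digit := Bool × ℕ

/-- The sign of the points in the cylinder of `d`. -/
def sg (d : Digit) : ℝ := if d.1 then 1 else -1

/-- The value of the partial quotient of `d`. -/
def dig (d : Digit) : ℝ := if d.1 then d.2 + 1 else d.2 + 2

/-- The inverse branch `y ↦ ε / (a + y)`. -/
def V (d : Digit) (y : ℝ) : ℝ := sg d / (dig d + y)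

variable {α : ℝ}

lemma measurable_nakadaT (α : ℝ) : Measurable (nakadaT α) := by
  unfold nakadaT
  refine Measurable.ite (measurableSet_singleton 0) measurable_const ?_
  have h : Measurable fun x : ℝ => |1 / x| := (measurable_const.div measurable_id).abs
  refine h.sub ?_
  have h2 : Measurable fun x : ℝ => ⌊|1 / x| + 1 - α⌋ :=
    Int.measurable_floor.comp ((h.add_const 1).sub_const α)
  exact (measurable_from_top (f := fun n : ℤ => (n : ℝ))).comp h2

lemma nakadaT_mem (h0 : 0 < α) (h1 : α ≤ 1) (x : ℝ) : nakadaT α x ∈ I α := by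
  unfold nakadaT I
  split_ifs with h
  · constructor <;> linarith
  · have a1 := Int.floor_le (|1 / x| + 1 - α)
    have a2 := Int.lt_floor_add_one (|1 / x| + 1 - α)
    constructor <;> linarith

lemma sg_sq (d : Digit) : sg d * sg d = 1 := by
  unfold sg; split_ifs <;> norm_num

lemma one_le_dig (d : Digit) : 1 ≤ dig d := by
  have : (0 : ℝ) ≤ d.2 := Nat.cast_nonneg _
  unfold dig; split_ifs <;> linarith

lemma dig_add_pos (h0 : 0 < α) (d : Digit) {y : ℝ} (hy : y ∈ I α) : 0 < dig d + y := by
  have := one_le_dig d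
  have := hy.1
  linarith

lemma V_ne_zero (h0 : 0 < α) (d : Digit) {y : ℝ} (hy : y ∈ I α) : V d y ≠ 0 := by
  have := dig_add_pos h0 d hy
  unfold V sg
  split_ifs <;> simp [this.ne']

lemma nakadaT_V (h0 : 0 < α) (d : Digit) {y : ℝ} (hy : y ∈ I α) : nakadaT α (V d y) = y := by
  have hp := dig_add_pos h0 d hy
  have habs : |1 / V d y| = dig d + y := by
    unfold V sg
    split_ifs
    · simp [abs_of_pos hp]
    · simp only [one_div, inv_div]
      rw [abs_div, abs_neg, abs_one, div_one, abs_of_pos hp]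
  obtain ⟨n, hn⟩ : ∃ n : ℤ, dig d = n := by
    unfold dig
    split_ifs
    · exact ⟨d.2 + 1, by push_cast; ring⟩
    · exact ⟨d.2 + 2, by push_cast; ring⟩
  have hfl : ⌊dig d + y + 1 - α⌋ = n := by
    rw [Int.floor_eq_iff, hn]
    have h1 := hy.1
    have h2 := hy.2
    constructor <;> linarith
  unfold nakadaT
  rw [if_neg (V_ne_zero h0 d hy), habs, hfl, hn]
  ring

lemma V_pos_of_fst (h0 : 0 < α) {d : Digit} (hd : d.1 = true) {y : ℝ} (hy : y ∈ I α) :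
    0 < V d y := by
  have := dig_add_pos h0 d hy
  simp only [V, sg, hd, if_true]
  positivity

lemma V_neg_of_fst (h0 : 0 < α) {d : Digit} (hd : d.1 = false) {y : ℝ} (hy : y ∈ I α) :
    V d y < 0 := by
  have := dig_add_pos h0 d hy
  simp only [V, sg, hd]
  exact div_neg_of_neg_of_pos (by norm_num) this

lemma V_digit_injective (h0 : 0 < α) {d d' : Digit} {y : ℝ} (hy : y ∈ I α)
    (h : V d y = V d' y) : d = d' := by
  have hp := dig_add_pos h0 d hy
  have hp' := dig_add_pos h0 d' hy
  obtain ⟨b, k⟩ := d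
  obtain ⟨b', k'⟩ := d'
  have hb : b = b' := by
    cases b <;> cases b' <;> try rfl
    · have a1 := V_neg_of_fst h0 (d := (false, k)) rfl hy
      have a2 := V_pos_of_fst h0 (d := (true, k')) rfl hy
      linarith
    · have a1 := V_neg_of_fst h0 (d := (false, k')) rfl hy
      have a2 := V_pos_of_fst h0 (d := (true, k)) rfl hy
      linarith
  subst hb
  have hk : dig (b, k) = dig (b, k') := by
    have hs : sg (b, k) = sg (b, k') := rfl
    have hs0 : sg (b, k') ≠ 0 := by unfold sg; split_ifs <;> norm_num
    unfold V at h
    rw [hs, div_eq_div_iff hp.ne' hp'.ne'] at h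
    linarith [mul_left_cancel₀ hs0 h]
  have : (k : ℝ) = k' := by
    unfold dig at hk
    cases b <;> simpa using hk
  rw [Nat.cast_injective this]

/-- Every nonzero point of the domain lies in the cylinder of some digit. On the negative side
the digit is at least `2` because `1/u + u ≥ 2` for `u > 0`. -/
lemma exists_V_eq (h0 : 0 < α) (h1 : α ≤ 1) {x : ℝ} (hx : x ∈ I α) (hne : x ≠ 0) :
    ∃ d, V d (nakadaT α x) = x := by
  have hfl : ∀ n : ℤ, n ≤ ⌊|1 / x| + 1 - α⌋ → (n : ℝ) ≤ |1 / x| + 1 - α := fun n hn =>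
    Int.le_floor.1 hn
  rcases lt_or_gt_of_ne hne with hn | hp
  · have habs : |1 / x| = -(1 / x) := abs_of_neg (one_div_neg.2 hn)
    have h2 : (2 : ℤ) ≤ ⌊|1 / x| + 1 - α⌋ := by
      rw [Int.le_floor, habs]
      have hu : 0 < -x := by linarith
      have hu1 : -x ≤ 1 - α := by linarith [hx.1]
      have e : -(1 / x) = 1 / (-x) := by rw [one_div_neg_eq_neg_one_div]
      have : 1 / (1 - α) ≤ 1 / (-x) := one_div_le_one_div_of_le hu hu1
      have hs : 0 < 1 - α := by linarith
      have h3 : 2 ≤ 1 / (1 - α) + (1 - α) := by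
        rw [div_add' _ _ _ hs.ne', le_div_iff₀ hs]
        nlinarith [sq_nonneg ((1 - α) - 1)]
      push_cast
      rw [e]; linarith
    obtain ⟨k, hk⟩ := Int.eq_ofNat_of_zero_le (sub_nonneg.2 h2)
    refine ⟨(false, k), ?_⟩
    have hk' : ⌊|1 / x| + 1 - α⌋ = (k : ℤ) + 2 := by omega
    rw [habs] at hk'
    simp only [V, sg, dig, nakadaT, if_neg hne, habs, hk']
    push_cast
    have : (k : ℝ) + 2 + (-(1 / x) - (k + 2)) = -(1 / x) := by ring
    rw [this]
    field_simp
  · have habs : |1 / x| = 1 / x := abs_of_pos (one_div_pos.2 hp)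
    have h2 : (1 : ℤ) ≤ ⌊|1 / x| + 1 - α⌋ := by
      rw [Int.le_floor, habs]
      have : 1 / α ≤ 1 / x := one_div_le_one_div_of_le hp hx.2.le
      have h3 : 1 ≤ 1 / α := by rw [le_div_iff₀ h0]; linarith
      push_cast
      linarith
    obtain ⟨k, hk⟩ := Int.eq_ofNat_of_zero_le (sub_nonneg.2 h2)
    refine ⟨(true, k), ?_⟩
    have hk' : ⌊|1 / x| + 1 - α⌋ = (k : ℤ) + 1 := by omega
    rw [habs] at hk'
    simp only [V, sg, dig, nakadaT, if_neg hne, habs, hk']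
    push_cast
    have : (k : ℝ) + 1 + (1 / x - (k + 1)) = 1 / x := by ring
    rw [this]
    field_simp

lemma V_strictAnti (h0 : 0 < α) {d : Digit} (hd : d.1 = true) : StrictAntiOn (V d) (I α) := by
  intro y hy z hz hyz
  have := dig_add_pos h0 d hy
  simp only [V, sg, hd, if_true]
  exact one_div_lt_one_div_of_lt this (by linarith)

lemma V_strictMono (h0 : 0 < α) {d : Digit} (hd : d.1 = false) : StrictMonoOn (V d) (I α) := by
  intro y hy z hz hyz
  have := dig_add_pos h0 d hy
  simp only [V, sg, hd, Bool.false_eq_true, if_false]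
  rw [neg_div, neg_div, neg_lt_neg_iff]
  exact one_div_lt_one_div_of_lt this (by linarith)

lemma V_injOn (h0 : 0 < α) (d : Digit) : InjOn (V d) (I α) := by
  rcases hd : d.1 with _ | _
  · exact (V_strictMono h0 hd).injOn
  · exact (V_strictAnti h0 hd).injOn

/-- `d` precedes `d'` when the cylinder of `d` lies to the left of that of `d'`. -/
def digLt (d d' : Digit) : Prop :=
  (d.1 = false ∧ d'.1 = true) ∨ (d.1 = false ∧ d'.1 = false ∧ d.2 < d'.2) ∨
    (d.1 = true ∧ d'.1 = true ∧ d'.2 < d.2)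

lemma V_lt_V_of_digLt (h0 : 0 < α) {d d' : Digit} (h : digLt d d') {y y' : ℝ} (hy : y ∈ I α)
    (hy' : y' ∈ I α) : V d y < V d' y' := by
  have hp := dig_add_pos h0 d hy
  have hp' := dig_add_pos h0 d' hy'
  have b1 := hy.1
  have b2 := hy.2
  have b3 := hy'.1
  have b4 := hy'.2
  rcases h with ⟨a, b⟩ | ⟨a, b, c⟩ | ⟨a, b, c⟩
  · exact (V_neg_of_fst h0 a hy).trans (V_pos_of_fst h0 b hy')
  · have c' : (d.2 : ℝ) + 1 ≤ d'.2 := by exact_mod_cast c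
    simp only [dig, a, b, Bool.false_eq_true, if_false] at hp hp'
    simp only [V, sg, dig, a, b, Bool.false_eq_true, if_false]
    rw [neg_div, neg_div, neg_lt_neg_iff]
    exact one_div_lt_one_div_of_lt hp (by linarith)
  · have c' : (d'.2 : ℝ) + 1 ≤ d.2 := by exact_mod_cast c
    simp only [dig, a, b, if_true] at hp hp'
    simp only [V, sg, dig, a, b, if_true]
    exact one_div_lt_one_div_of_lt hp' (by linarith)

lemma digLt_trichotomy {d d' : Digit} (h : d ≠ d') : digLt d d' ∨ digLt d' d := by
  obtain ⟨b, k⟩ := d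
  obtain ⟨b', k'⟩ := d'
  cases b <;> cases b' <;> simp [digLt] at h ⊢ <;> omega

/-! ### Pieces and the transfer operator -/

/-- A piece is an interval `J ⊆ [α-1, α)` together with parameters `0 ≤ r ≤ q`, `0 < q`. It
stands for the measure with density `(q + r x)⁻²` on `J`, which is the shape of the image of
Lebesgue measure under a branch of an iterate of the map. -/
structure Piece (α : ℝ) where
  /-- The interval carrying the piece. -/
  J : Set ℝ
  ordConnected : J.OrdConnected
  subset : J ⊆ I α
  /-- The constant coefficient of the denominator. -/
  q : ℝ
  /-- The linear coefficient of the denominator. -/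
  r : ℝ
  r_nonneg : 0 ≤ r
  r_le : r ≤ q
  q_pos : 0 < q

namespace Piece

/-- The density of a piece with respect to Lebesgue measure on `J`. -/
def dens (s : Piece α) (x : ℝ) : ℝ := 1 / (s.q + s.r * x) ^ 2

/-- The integral of `g` against the measure represented by the piece. -/
def integ (g : ℝ → ℝ≥0∞) (s : Piece α) : ℝ≥0∞ :=
  ∫⁻ x in s.J, g x * ENNReal.ofReal (s.dens x)

/-- The total mass of the measure represented by the piece. -/
def mass (s : Piece α) : ℝ≥0∞ := integ (fun _ => 1) s

lemma measurableSet_J (s : Piece α) : MeasurableSet s.J := s.ordConnected.measurableSet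

lemma le_denom (h1 : α ≤ 1) (s : Piece α) {x : ℝ} (hx : x ∈ I α) :
    α * s.q ≤ s.q + s.r * x := by
  have a1 := s.r_nonneg
  have a2 := s.r_le
  have a3 := hx.1
  nlinarith

lemma denom_le (h1 : α ≤ 1) (s : Piece α) {x : ℝ} (hx : x ∈ I α) :
    s.q + s.r * x ≤ 2 * s.q := by
  have a1 := s.r_nonneg
  have a2 := s.r_le
  have a3 := hx.2
  nlinarith

lemma denom_pos (h0 : 0 < α) (h1 : α ≤ 1) (s : Piece α) {x : ℝ} (hx : x ∈ I α) :
    0 < s.q + s.r * x :=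
  (mul_pos h0 s.q_pos).trans_le (s.le_denom h1 hx)

lemma dens_le (h0 : 0 < α) (h1 : α ≤ 1) (s : Piece α) {x : ℝ} (hx : x ∈ I α) :
    s.dens x ≤ 1 / (α * s.q) ^ 2 := by
  have := mul_pos h0 s.q_pos
  have := s.le_denom h1 hx
  unfold dens
  gcongr

lemma le_dens (h0 : 0 < α) (h1 : α ≤ 1) (s : Piece α) {x : ℝ} (hx : x ∈ I α) :
    1 / (2 * s.q) ^ 2 ≤ s.dens x := by
  have := s.denom_pos h0 h1 hx
  have := s.denom_le h1 hx
  unfold dens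
  gcongr

/-- The part of the image of a piece that comes from the cylinder of `d`. -/
def child (h0 : 0 < α) (s : Piece α) (d : Digit) : Piece α where
  J := {y | y ∈ I α ∧ V d y ∈ s.J}
  ordConnected := by
    refine ⟨fun y hy z hz w hw => ?_⟩
    have hwI : w ∈ I α := ordConnected_Ico.out hy.1 hz.1 hw
    refine ⟨hwI, ?_⟩
    rcases hd : d.1 with _ | _
    · have hm := (V_strictMono h0 hd).monotoneOn
      exact s.ordConnected.out hy.2 hz.2 ⟨hm hy.1 hwI hw.1, hm hwI hz.1 hw.2⟩
    · have hm := (V_strictAnti h0 hd).antitoneOn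
      exact s.ordConnected.out hz.2 hy.2 ⟨hm hwI hz.1 hw.2, hm hy.1 hwI hw.1⟩
  subset := fun y hy => hy.1
  q := dig d * s.q + sg d * s.r
  r := s.q
  r_nonneg := s.q_pos.le
  r_le := by
    have a1 := s.r_nonneg
    have a2 := s.r_le
    have a3 := s.q_pos
    have : (0 : ℝ) ≤ d.2 := Nat.cast_nonneg _
    unfold dig sg
    split_ifs <;> nlinarith
  q_pos := by
    have a1 := s.r_nonneg
    have a2 := s.r_le
    have a3 := s.q_pos
    have : (0 : ℝ) ≤ d.2 := Nat.cast_nonneg _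
    unfold dig sg
    split_ifs <;> nlinarith

lemma mem_child (h0 : 0 < α) (s : Piece α) (d : Digit) {y : ℝ} :
    y ∈ (s.child h0 d).J ↔ y ∈ I α ∧ V d y ∈ s.J := Iff.rfl

lemma denom_V (h0 : 0 < α) (s : Piece α) (d : Digit) {y : ℝ} (hy : y ∈ I α) :
    s.q + s.r * V d y = ((s.child h0 d).q + (s.child h0 d).r * y) / (dig d + y) := by
  have := (dig_add_pos h0 d hy).ne'
  simp only [child, V]
  field_simp
  ring

lemma hasDerivAt_V (h0 : 0 < α) (d : Digit) {y : ℝ} (hy : y ∈ I α) :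
    HasDerivAt (V d) (-sg d / (dig d + y) ^ 2) y := by
  have h := ((hasDerivAt_id y).const_add (dig d)).inv (dig_add_pos h0 d hy).ne'
  have h2 := h.const_mul (sg d)
  have e : sg d * (-1 / (dig d + id y) ^ 2) = -sg d / (dig d + y) ^ 2 := by
    simp only [id]
    ring
  rw [e] at h2
  exact h2

/-- The part of `J` lying in the cylinder of `d`. -/
lemma image_child (h0 : 0 < α) (h1 : α ≤ 1) (s : Piece α) (d : Digit) :
    V d '' (s.child h0 d).J = {x | x ∈ s.J ∧ V d (nakadaT α x) = x} := by
  ext x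
  constructor
  · rintro ⟨y, hy, rfl⟩
    exact ⟨hy.2, by rw [nakadaT_V h0 d hy.1]⟩
  · rintro ⟨hx, hV⟩
    exact ⟨nakadaT α x, ⟨nakadaT_mem h0 h1 x, by rwa [hV]⟩, hV⟩

lemma measurable_V (d : Digit) : Measurable (V d) :=
  measurable_const.div (measurable_const.add measurable_id)

/-- The image of a piece under the map is the sum of its children. -/
lemma integ_comp (h0 : 0 < α) (h1 : α ≤ 1) (g : ℝ → ℝ≥0∞) (s : Piece α) :
    integ (g ∘ nakadaT α) s = ∑' d, integ g (s.child h0 d) := by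
  have hm : ∀ d, MeasurableSet (V d '' (s.child h0 d).J) := fun d => by
    rw [image_child h0 h1]
    exact s.measurableSet_J.inter
      (measurableSet_eq_fun ((measurable_V d).comp (measurable_nakadaT α)) measurable_id)
  have hd : Pairwise (Function.onFun Disjoint fun d => V d '' (s.child h0 d).J) := by
    intro d d' hne
    refine Set.disjoint_left.2 fun x hx hx' => hne ?_
    simp only [image_child h0 h1] at hx hx'
    exact V_digit_injective h0 (nakadaT_mem h0 h1 x) (hx.2.trans hx'.2.symm)
  have hU : (⋃ d, V d '' (s.child h0 d).J) =ᵐ[volume] s.J := by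
    have e : (⋃ d, V d '' (s.child h0 d).J) = s.J \ {0} := by
      ext x
      simp only [mem_iUnion, image_child h0 h1, Set.mem_sdiff, mem_singleton_iff, mem_ofPred_eq]
      constructor
      · rintro ⟨d, hx, hV⟩
        refine ⟨hx, fun h => ?_⟩
        exact V_ne_zero h0 d (nakadaT_mem h0 h1 x) (hV.trans h)
      · rintro ⟨hx, hne⟩
        obtain ⟨d, hd⟩ := exists_V_eq h0 h1 (s.subset hx) hne
        exact ⟨d, hx, hd⟩
    rw [e]
    exact sdiff_null_ae_eq_self (measure_singleton 0)
  unfold integ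
  rw [← setLIntegral_congr hU, lintegral_iUnion hm hd]
  refine tsum_congr fun d => ?_
  rw [lintegral_image_eq_lintegral_abs_deriv_mul (s.child h0 d).measurableSet_J
    (fun y hy => (hasDerivAt_V h0 d hy.1).hasDerivWithinAt)
    ((V_injOn h0 d).mono (s.child h0 d).subset)]
  refine setLIntegral_congr_fun (s.child h0 d).measurableSet_J fun y hy => ?_
  have hp := dig_add_pos h0 d hy.1
  have hq := (s.child h0 d).denom_pos h0 h1 hy.1
  have habs : |-sg d / (dig d + y) ^ 2| = 1 / (dig d + y) ^ 2 := by
    have hsg : |sg d| = 1 := by unfold sg; split_ifs <;> simp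
    rw [abs_div, abs_neg, hsg, abs_of_pos (pow_pos hp 2)]
  simp only [Function.comp, nakadaT_V h0 d hy.1]
  rw [mul_left_comm, ← ENNReal.ofReal_mul (abs_nonneg _), habs]
  congr 2
  simp only [dens]
  rw [denom_V h0 s d hy.1]
  field_simp

/-- The operator on functions of pieces dual to the push-forward by the map. -/
def P (h0 : 0 < α) (F : Piece α → ℝ≥0∞) (s : Piece α) : ℝ≥0∞ := ∑' d, F (s.child h0 d)

lemma P_mono (h0 : 0 < α) {F G : Piece α → ℝ≥0∞} (h : ∀ s, F s ≤ G s) (s : Piece α) :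
    P h0 F s ≤ P h0 G s :=
  ENNReal.tsum_le_tsum fun _ => h _

lemma iterate_P_mono (h0 : 0 < α) (n : ℕ) {F G : Piece α → ℝ≥0∞} (h : ∀ s, F s ≤ G s)
    (s : Piece α) : (P h0)^[n] F s ≤ (P h0)^[n] G s := by
  induction n generalizing F G with
  | zero => exact h s
  | succ n ih =>
    rw [Function.iterate_succ_apply, Function.iterate_succ_apply]
    exact ih (P_mono h0 h)

lemma iterate_P_linear (h0 : 0 < α) (n : ℕ) (F G : Piece α → ℝ≥0∞) (a b : ℝ≥0∞) (s : Piece α) :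
    (P h0)^[n] (fun s => a * F s + b * G s) s
      = a * (P h0)^[n] F s + b * (P h0)^[n] G s := by
  induction n generalizing F G with
  | zero => rfl
  | succ n ih =>
    rw [Function.iterate_succ_apply, Function.iterate_succ_apply, Function.iterate_succ_apply,
      ← ih]
    have e : P h0 (fun s => a * F s + b * G s) = fun s => a * P h0 F s + b * P h0 G s := by
      funext s
      simp only [P]
      rw [ENNReal.tsum_add, ENNReal.tsum_mul_left, ENNReal.tsum_mul_left]
    rw [e]

lemma P_mass (h0 : 0 < α) (h1 : α ≤ 1) : P h0 (mass (α := α)) = mass := by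
  funext s
  exact (integ_comp h0 h1 (fun _ => 1) s).symm

lemma iterate_P_mass (h0 : 0 < α) (h1 : α ≤ 1) (n : ℕ) :
    (P h0)^[n] (mass (α := α)) = mass :=
  Function.iterate_fixed (P_mass h0 h1) n

lemma integ_comp_iterate (h0 : 0 < α) (h1 : α ≤ 1) (n : ℕ) (g : ℝ → ℝ≥0∞) (s : Piece α) :
    integ (g ∘ (nakadaT α)^[n]) s = (P h0)^[n] (integ g) s := by
  induction n generalizing s with
  | zero => rfl
  | succ n ih =>
    rw [Function.iterate_succ, ← Function.comp_assoc, integ_comp h0 h1,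
      Function.iterate_succ_apply']
    exact tsum_congr fun d => ih _

/-! ### Contraction on incomplete pieces -/

/-- The supremum over the piece of its density relative to `dx / (1 + x)`. -/
def S (s : Piece α) : ℝ≥0∞ := ⨆ x ∈ s.J, ENNReal.ofReal ((1 + x) * s.dens x)

/-- The piece reaches up to the right end `α` of the domain (or is empty). -/
def Upper (s : Piece α) : Prop := ∀ x ∈ s.J, ∀ y ∈ I α, x ≤ y → y ∈ s.J

open Classical in
/-- The weight `1` for pieces that reach up to `α`, and `3/2` for all others. -/
def wt (s : Piece α) : ℝ := if s.Upper then 1 else 3 / 2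

/-- The piece occupies the whole domain. -/
def Full (s : Piece α) : Prop := s.J = I α

open Classical in
/-- The weighted density bound, set to zero on complete pieces. -/
def Ψ (s : Piece α) : ℝ≥0∞ := if s.Full then 0 else ENNReal.ofReal s.wt * s.S

lemma wt_le (s : Piece α) : s.wt ≤ 3 / 2 := by
  unfold wt; split_ifs <;> norm_num

lemma one_le_wt (s : Piece α) : 1 ≤ s.wt := by
  unfold wt; split_ifs <;> norm_num

/-- `J` meets the cylinder of `d`, which also contains a point to the left of `J`. -/
def Low (s : Piece α) (d : Digit) : Prop :=
  ∃ y ∈ I α, ∃ z ∈ I α, V d y ∈ s.J ∧ V d z ∉ s.J ∧ V d z < V d y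

/-- `J` meets the cylinder of `d`, which also contains a point to the right of `J`. -/
def High (s : Piece α) (d : Digit) : Prop :=
  ∃ y ∈ I α, ∃ z ∈ I α, V d y ∈ s.J ∧ V d z ∉ s.J ∧ V d y < V d z

lemma lt_of_not_mem_left (s : Piece α) {x z w : ℝ} (hx : x ∈ s.J) (hz : z ∉ s.J) (hzx : z < x)
    (hw : w ∈ s.J) : z < w := by
  by_contra! h
  exact hz (s.ordConnected.out hw hx ⟨h, hzx.le⟩)

lemma lt_of_not_mem_right (s : Piece α) {x z w : ℝ} (hx : x ∈ s.J) (hz : z ∉ s.J) (hxz : x < z)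
    (hw : w ∈ s.J) : w < z := by
  by_contra! h
  exact hz (s.ordConnected.out hx hw ⟨hxz.le, h⟩)

/-- A piece has at most one child cut off on the left. -/
lemma Low.unique (h0 : 0 < α) {s : Piece α} {d d' : Digit} (h : s.Low d) (h' : s.Low d') :
    d = d' := by
  by_contra hne
  obtain ⟨y, hy, z, hz, hyJ, hzJ, hzy⟩ := h
  obtain ⟨y', hy', z', hz', hyJ', hzJ', hzy'⟩ := h'
  rcases digLt_trichotomy hne with hl | hl
  · have a1 := V_lt_V_of_digLt h0 hl hy hz'
    have a2 := s.lt_of_not_mem_left hyJ' hzJ' hzy' hyJ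
    linarith
  · have a1 := V_lt_V_of_digLt h0 hl hy' hz
    have a2 := s.lt_of_not_mem_left hyJ hzJ hzy hyJ'
    linarith

/-- A piece has at most one child cut off on the right. -/
lemma High.unique (h0 : 0 < α) {s : Piece α} {d d' : Digit} (h : s.High d) (h' : s.High d') :
    d = d' := by
  by_contra hne
  obtain ⟨y, hy, z, hz, hyJ, hzJ, hzy⟩ := h
  obtain ⟨y', hy', z', hz', hyJ', hzJ', hzy'⟩ := h'
  rcases digLt_trichotomy hne with hl | hl
  · have a1 := V_lt_V_of_digLt h0 hl hz hy'
    have a2 := s.lt_of_not_mem_right hyJ hzJ hzy hyJ'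
    linarith
  · have a1 := V_lt_V_of_digLt h0 hl hz' hy
    have a2 := s.lt_of_not_mem_right hyJ' hzJ' hzy' hyJ
    linarith

lemma digLt_of_low_high (h0 : 0 < α) {s : Piece α} {d d' : Digit} (h : s.Low d) (h' : s.High d')
    (hne : d ≠ d') : digLt d d' := by
  rcases digLt_trichotomy hne with hl | hl
  · exact hl
  · obtain ⟨y, hy, z, hz, hyJ, hzJ, hzy⟩ := h
    obtain ⟨y', hy', z', hz', hyJ', hzJ', hzy'⟩ := h'
    have a1 := V_lt_V_of_digLt h0 hl hz' hy
    have a2 := s.lt_of_not_mem_right hyJ' hzJ' hzy' hyJ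
    linarith

lemma low_or_high (h0 : 0 < α) {s : Piece α} {d : Digit} (h : (s.child h0 d).Ψ ≠ 0) :
    s.Low d ∨ s.High d := by
  unfold Ψ at h
  split_ifs at h with hf
  · exact absurd rfl h
  have hne : (s.child h0 d).J.Nonempty := by
    by_contra he
    rw [not_nonempty_iff_eq_empty] at he
    simp [S, he] at h
  obtain ⟨y, hy, hyJ⟩ := hne
  obtain ⟨z, hz, hzJ⟩ : ∃ z ∈ I α, V d z ∉ s.J := by
    by_contra! hall
    exact hf (Subset.antisymm (s.child h0 d).subset fun z hz => ⟨hz, hall z hz⟩)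
  rcases lt_trichotomy (V d z) (V d y) with hl | he | hl
  · exact Or.inl ⟨y, hy, z, hz, hyJ, hzJ, hl⟩
  · rw [he] at hzJ; exact absurd hyJ hzJ
  · exact Or.inr ⟨y, hy, z, hz, hyJ, hzJ, hl⟩

/-- Positive branches reverse orientation: without a cut on the left, the child reaches `α`. -/
lemma upper_child_of_not_low (h0 : 0 < α) {s : Piece α} {d : Digit} (hd : d.1 = true)
    (h : ¬ s.Low d) : (s.child h0 d).Upper := by
  intro y hy z hz hyz
  refine ⟨hz, ?_⟩
  by_contra hzJ
  rcases hyz.eq_or_lt with rfl | hlt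
  · exact hzJ hy.2
  · exact h ⟨y, hy.1, z, hz, hy.2, hzJ, V_strictAnti h0 hd hy.1 hz hlt⟩

/-- Negative branches preserve orientation: without a cut on the right, the child reaches `α`. -/
lemma upper_child_of_not_high (h0 : 0 < α) {s : Piece α} {d : Digit} (hd : d.1 = false)
    (h : ¬ s.High d) : (s.child h0 d).Upper := by
  intro y hy z hz hyz
  refine ⟨hz, ?_⟩
  by_contra hzJ
  rcases hyz.eq_or_lt with rfl | hlt
  · exact hzJ hy.2
  · exact h ⟨y, hy.1, z, hz, hy.2, hzJ, V_strictMono h0 hd hy.1 hz hlt⟩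

lemma not_high_of_upper (h0 : 0 < α) {s : Piece α} {d : Digit} (hd : d.1 = false)
    (hu : s.Upper) : ¬ s.High d := by
  rintro ⟨y, hy, z, hz, hyJ, hzJ, hlt⟩
  refine hzJ (hu _ hyJ _ ⟨?_, ?_⟩ hlt.le)
  · linarith [(s.subset hyJ).1]
  · linarith [V_neg_of_fst h0 hd hz]

/-- If the branch contracts the density `1 / (1 + x)` by the factor `f` on `J`, then passing to
the child multiplies `S` by at most `f`. -/
lemma S_child_le (h0 : 0 < α) (h1 : α ≤ 1) (s : Piece α) (d : Digit) {f : ℝ} (hf : 0 ≤ f)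
    (h : ∀ y ∈ I α, V d y ∈ s.J → 1 + y ≤ f * ((1 + V d y) * (dig d + y) ^ 2)) :
    (s.child h0 d).S ≤ ENNReal.ofReal f * s.S := by
  refine iSup₂_le fun y hy => ?_
  have hle : ENNReal.ofReal ((1 + V d y) * s.dens (V d y)) ≤ s.S :=
    le_iSup₂ (f := fun x (_ : x ∈ s.J) => ENNReal.ofReal ((1 + x) * s.dens x)) (V d y) hy.2
  refine le_trans ?_ (mul_le_mul_right hle (ENNReal.ofReal f))
  rw [← ENNReal.ofReal_mul hf]
  refine ENNReal.ofReal_le_ofReal ?_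
  have hp := dig_add_pos h0 d hy.1
  have hq := (s.child h0 d).denom_pos h0 h1 hy.1
  have hy' := h y hy.1 hy.2
  simp only [dens]
  rw [denom_V h0 s d hy.1]
  have e : f * ((1 + V d y) * (1 / (((s.child h0 d).q + (s.child h0 d).r * y) / (dig d + y)) ^ 2))
      = f * ((1 + V d y) * (dig d + y) ^ 2)
        * (1 / ((s.child h0 d).q + (s.child h0 d).r * y) ^ 2) := by
    field_simp
  rw [e]
  gcongr

lemma S_child_le_pos (h0 : 0 < α) (h1 : α ≤ 1) (s : Piece α) {d : Digit} (hd : d.1 = true) :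
    (s.child h0 d).S ≤ ENNReal.ofReal (α / (1 + α)) * s.S := by
  refine s.S_child_le h0 h1 d (by positivity) fun y hy hyJ => ?_
  have hp := dig_add_pos h0 d hy
  have hV : V d y = 1 / (dig d + y) := by simp [V, sg, hd]
  have hlt := (s.subset hyJ).2
  have h1d := one_le_dig d
  have hy1 := hy.1
  rw [hV] at hlt ⊢
  set D := dig d + y
  have hD : 1 < α * D := by rwa [div_lt_iff₀ hp] at hlt
  have e : α / (1 + α) * ((1 + 1 / D) * D ^ 2) = α * (D * (D + 1)) / (1 + α) := by
    field_simp
  rw [e, le_div_iff₀ (by linarith)]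
  nlinarith

lemma S_child_le_pos' (h0 : 0 < α) (h1 : α ≤ 1) (s : Piece α) {d : Digit} (hd : d.1 = true)
    (hk : 1 ≤ d.2) : (s.child h0 d).S ≤ ENNReal.ofReal (1 / 5) * s.S := by
  refine s.S_child_le h0 h1 d (by positivity) fun y hy hyJ => ?_
  have hp := dig_add_pos h0 d hy
  have hV : V d y = 1 / (dig d + y) := by simp [V, sg, hd]
  have h1d : 2 ≤ dig d := by
    have : (1 : ℝ) ≤ d.2 := by exact_mod_cast hk
    simp only [dig, hd, if_true]; linarith
  rw [hV]
  set D := dig d + y with hDef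
  have e : 1 / 5 * ((1 + 1 / D) * D ^ 2) = 1 / 5 * (D * (D + 1)) := by
    field_simp
  rw [e]
  nlinarith [sq_nonneg (D - 2)]

lemma S_child_le_neg (h0 : 0 < α) (h1 : α ≤ 1) (s : Piece α) {d : Digit} (hd : d.1 = false) :
    (s.child h0 d).S ≤ ENNReal.ofReal (1 - α) * s.S := by
  refine s.S_child_le h0 h1 d (by linarith) fun y hy hyJ => ?_
  have hp := dig_add_pos h0 d hy
  have hV : V d y = -1 / (dig d + y) := by simp [V, sg, hd]
  have hle := (s.subset hyJ).1
  have h1d : 2 ≤ dig d := by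
    have : (0 : ℝ) ≤ d.2 := Nat.cast_nonneg _
    simp only [dig, hd, Bool.false_eq_true, if_false]; linarith
  have hy1 := hy.1
  rw [hV] at hle ⊢
  set D := dig d + y with hDef
  have hD : 1 ≤ (1 - α) * D := by rw [le_div_iff₀ hp] at hle; linarith
  have e : (1 - α) * ((1 + -1 / D) * D ^ 2) = (1 - α) * (D * (D - 1)) := by
    field_simp
    ring
  rw [e]
  nlinarith

lemma S_child_le_neg' (h0 : 0 < α) (h1 : α ≤ 1) (s : Piece α) {d : Digit} (hd : d.1 = false)
    (hk : 1 ≤ d.2) : (s.child h0 d).S ≤ ENNReal.ofReal (1 / 5) * s.S := by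
  refine s.S_child_le h0 h1 d (by positivity) fun y hy hyJ => ?_
  have hp := dig_add_pos h0 d hy
  have hV : V d y = -1 / (dig d + y) := by simp [V, sg, hd]
  have h1d : 3 ≤ dig d := by
    have : (1 : ℝ) ≤ d.2 := by exact_mod_cast hk
    simp only [dig, hd, Bool.false_eq_true, if_false]; linarith
  rw [hV]
  set D := dig d + y with hDef
  have e : 1 / 5 * ((1 + -1 / D) * D ^ 2) = 1 / 5 * (D * (D - 1)) := by
    field_simp
    ring
  rw [e]
  nlinarith [sq_nonneg (D - 3)]

/-- The contraction rate of the weighted density bound on incomplete pieces. -/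
def θ (α : ℝ) : ℝ := 1 - α ^ 2 / 10

lemma Ψ_le_of (s t : Piece α) {f w : ℝ} (hw0 : 0 ≤ w) (hw : t.wt ≤ w)
    (hS : t.S ≤ ENNReal.ofReal f * s.S) : t.Ψ ≤ ENNReal.ofReal (w * f) * s.S := by
  unfold Ψ
  split_ifs
  · exact bot_le
  · rw [ENNReal.ofReal_mul hw0, mul_assoc]
    gcongr

lemma wt_le_one {s : Piece α} (h : s.Upper) : s.wt ≤ 1 := by simp [wt, h]

/-- The inverse branches contract on incomplete children, for the weights `wt`. This is where the
choice of the reference density `1 / (1 + x)` and of the weight `3/2` matters. -/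
lemma P_Ψ_le (h0 : 0 < α) (h1 : α ≤ 1) (s : Piece α) :
    P h0 Ψ s ≤ ENNReal.ofReal (θ α * s.wt) * s.S := by
  have hq : α / (1 + α) ≤ 1 / 2 := by
    rw [div_le_iff₀ (by linarith)]; linarith
  have hq' : α / (1 + α) ≤ α - α ^ 2 / 2 := by
    rw [div_le_iff₀ (by linarith)]
    nlinarith [pow_pos h0 3, mul_nonneg (sq_nonneg α) (sub_nonneg.2 h1)]
  have hq0 : 0 ≤ α / (1 + α) := by positivity
  have hα2 : α ^ 2 ≤ α := by nlinarith
  have hθ : 9 / 10 ≤ θ α := by unfold θ; nlinarith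
  have hw1 := s.one_le_wt
  have hwθ : 9 / 10 ≤ θ α * s.wt := by nlinarith
  have hnu : ¬ s.Upper → s.wt = 3 / 2 := fun h => by simp [wt, h]
  by_cases hsingle : ∃ d₀, ∀ d, (s.child h0 d).Ψ ≠ 0 → d = d₀
  · obtain ⟨d, hd⟩ := hsingle
    have hsum : P h0 Ψ s = (s.child h0 d).Ψ :=
      tsum_eq_single d fun d' hd' => by
        by_contra h
        exact hd' (hd d' h)
    rw [hsum]
    rcases hd1 : d.1 with _ | _
    · by_cases hu : s.Upper
      · refine (Ψ_le_of s _ zero_le_one (wt_le_one (upper_child_of_not_high h0 hd1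
          (not_high_of_upper h0 hd1 hu))) (S_child_le_neg h0 h1 s hd1)).trans ?_
        gcongr ENNReal.ofReal ?_ * _
        unfold θ
        nlinarith
      · refine (Ψ_le_of s _ (by norm_num) (wt_le _) (S_child_le_neg h0 h1 s hd1)).trans ?_
        gcongr ENNReal.ofReal ?_ * _
        rw [hnu hu]
        unfold θ
        nlinarith
    · refine (Ψ_le_of s _ (by norm_num) (wt_le _) (S_child_le_pos h0 h1 s hd1)).trans ?_
      gcongr ENNReal.ofReal ?_ * _
      linarith
  · -- Two incomplete children: one is cut off on the left only, the other on the right only.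
    obtain ⟨d₁, d₂, hne, hl, hh⟩ : ∃ d₁ d₂, d₁ ≠ d₂ ∧ s.Low d₁ ∧ s.High d₂ := by
      push Not at hsingle
      obtain ⟨a, ha, -⟩ := hsingle (true, 0)
      obtain ⟨b, hb, hba⟩ := hsingle a
      rcases low_or_high h0 ha with ha | ha <;> rcases low_or_high h0 hb with hb | hb
      · exact absurd (Low.unique h0 hb ha) hba
      · exact ⟨a, b, hba.symm, ha, hb⟩
      · exact ⟨b, a, hba, hb, ha⟩
      · exact absurd (High.unique h0 hb ha) hba
    have hlt := digLt_of_low_high h0 hl hh hne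
    have hnh : ¬ s.High d₁ := fun h => hne (High.unique h0 h hh)
    have hnl : ¬ s.Low d₂ := fun h => hne (Low.unique h0 hl h)
    have hsum : P h0 Ψ s = (s.child h0 d₁).Ψ + (s.child h0 d₂).Ψ := by
      rw [← Finset.sum_pair (f := fun d => (s.child h0 d).Ψ) hne]
      refine tsum_eq_sum fun d hd => ?_
      by_contra h
      rcases low_or_high h0 h with h | h
      · simp [Low.unique h0 h hl] at hd
      · simp [High.unique h0 h hh] at hd
    have combine : ∀ {w₁ f₁ w₂ f₂ : ℝ}, 0 ≤ w₁ * f₁ → 0 ≤ w₂ * f₂ →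
        w₁ * f₁ + w₂ * f₂ ≤ θ α * s.wt →
        (s.child h0 d₁).Ψ ≤ ENNReal.ofReal (w₁ * f₁) * s.S →
        (s.child h0 d₂).Ψ ≤ ENNReal.ofReal (w₂ * f₂) * s.S →
        (s.child h0 d₁).Ψ + (s.child h0 d₂).Ψ ≤ ENNReal.ofReal (θ α * s.wt) * s.S := by
      intro w₁ f₁ w₂ f₂ p1 p2 hle b1 b2
      refine (add_le_add b1 b2).trans ?_
      rw [← add_mul, ← ENNReal.ofReal_add p1 p2]
      gcongr
    rw [hsum]
    have hup2 : d₂.1 = true → (s.child h0 d₂).wt ≤ 1 := fun h =>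
      wt_le_one (upper_child_of_not_low h0 h hnl)
    have hup1 : d₁.1 = false → (s.child h0 d₁).wt ≤ 1 := fun h =>
      wt_le_one (upper_child_of_not_high h0 h hnh)
    rcases hlt with ⟨a, b⟩ | ⟨a, b, c⟩ | ⟨a, b, c⟩
    · refine combine (by linarith) (by linarith) ?_
        (Ψ_le_of s _ zero_le_one (hup1 a) (S_child_le_neg h0 h1 s a))
        (Ψ_le_of s _ zero_le_one (hup2 b) (S_child_le_pos h0 h1 s b))
      have : θ α ≤ θ α * s.wt := by nlinarith
      unfold θ at *
      nlinarith
    · have hu : ¬ s.Upper := fun hu => not_high_of_upper h0 b hu hh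
      refine combine (by linarith) (by norm_num) ?_
        (Ψ_le_of s _ zero_le_one (hup1 a) (S_child_le_neg h0 h1 s a))
        (Ψ_le_of s _ (by norm_num) (wt_le _) (S_child_le_neg' h0 h1 s b (by omega)))
      rw [hnu hu]
      unfold θ
      nlinarith
    · refine combine (by norm_num) (by linarith) ?_
        (Ψ_le_of s _ (by norm_num) (wt_le _) (S_child_le_pos' h0 h1 s a (by omega)))
        (Ψ_le_of s _ zero_le_one (hup2 b) (S_child_le_pos h0 h1 s b))
      linarith

/-! ### Bounds for images and for invariant sets -/

/-- Bounded distortion on complete pieces. -/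
lemma S_le_mass_of_full (h0 : 0 < α) (h1 : α ≤ 1) {s : Piece α} (hf : s.Full) :
    s.S ≤ ENNReal.ofReal (8 / α ^ 2) * s.mass := by
  have hq := s.q_pos
  have hm : ENNReal.ofReal (1 / (2 * s.q) ^ 2) ≤ s.mass := by
    have hI : volume s.J = 1 := by rw [hf, I, Real.volume_Ico]; simp
    calc ENNReal.ofReal (1 / (2 * s.q) ^ 2)
        = ∫⁻ x in s.J, ENNReal.ofReal (1 / (2 * s.q) ^ 2) := by simp [hI]
      _ ≤ s.mass := by
        refine setLIntegral_mono_ae' s.measurableSet_J (ae_of_all _ fun x hx => ?_)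
        rw [one_mul]
        exact ENNReal.ofReal_le_ofReal (s.le_dens h0 h1 (s.subset hx))
  refine le_trans (iSup₂_le fun x hx => ?_) (mul_le_mul_right hm _)
  rw [← ENNReal.ofReal_mul (by positivity)]
  refine ENNReal.ofReal_le_ofReal ?_
  have hxI := s.subset hx
  have hd := s.dens_le h0 h1 hxI
  have hx1 : 0 ≤ 1 + x := by linarith [hxI.1]
  have hd0 : 0 ≤ s.dens x := by unfold dens; positivity
  calc (1 + x) * s.dens x ≤ 2 * (1 / (α * s.q) ^ 2) := by
        gcongr; linarith [hxI.2]
    _ = 8 / α ^ 2 * (1 / (2 * s.q) ^ 2) := by field_simp; norm_num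

lemma wt_mul_S_le (h0 : 0 < α) (h1 : α ≤ 1) (s : Piece α) :
    ENNReal.ofReal s.wt * s.S ≤ s.Ψ + ENNReal.ofReal (12 / α ^ 2) * s.mass := by
  by_cases hf : s.Full
  · have e : 12 / α ^ 2 = 3 / 2 * (8 / α ^ 2) := by ring
    rw [e, ENNReal.ofReal_mul (by norm_num), mul_assoc]
    refine le_add_left ?_
    gcongr
    · exact s.wt_le
    · exact S_le_mass_of_full h0 h1 hf
  · simp [Ψ, hf]

lemma dens_le_wt_mul_S (h0 : 0 < α) (s : Piece α) {x : ℝ} (hx : x ∈ s.J) :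
    ENNReal.ofReal (s.dens x) ≤ ENNReal.ofReal (1 / α) * (ENNReal.ofReal s.wt * s.S) := by
  have hle : ENNReal.ofReal ((1 + x) * s.dens x) ≤ s.S :=
    le_iSup₂ (f := fun x (_ : x ∈ s.J) => ENNReal.ofReal ((1 + x) * s.dens x)) x hx
  have h1 : (1 : ℝ≥0∞) ≤ ENNReal.ofReal s.wt := by
    rw [ENNReal.one_le_ofReal]; exact s.one_le_wt
  have hd : 0 ≤ s.dens x := by unfold dens; positivity
  calc ENNReal.ofReal (s.dens x)
      ≤ ENNReal.ofReal (1 / α * ((1 + x) * s.dens x)) := by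
        refine ENNReal.ofReal_le_ofReal ?_
        have : 1 ≤ 1 / α * (1 + x) := by
          rw [one_div, inv_mul_eq_div, le_div_iff₀ h0]; linarith [(s.subset hx).1]
        nlinarith
    _ = ENNReal.ofReal (1 / α) * (1 * ENNReal.ofReal ((1 + x) * s.dens x)) := by
        rw [one_mul, ENNReal.ofReal_mul (by positivity)]
    _ ≤ _ := by gcongr

lemma integ_le (h0 : 0 < α) (g : ℝ → ℝ≥0∞) (hg : Measurable g) (s : Piece α) :
    integ g s ≤ ENNReal.ofReal (1 / α) * (∫⁻ x in I α, g x)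
      * (ENNReal.ofReal s.wt * s.S) := by
  calc integ g s
      ≤ ∫⁻ x in s.J, g x * (ENNReal.ofReal (1 / α) * (ENNReal.ofReal s.wt * s.S)) := by
        refine setLIntegral_mono_ae' s.measurableSet_J (ae_of_all _ fun x hx => ?_)
        gcongr
        exact s.dens_le_wt_mul_S h0 hx
    _ = (∫⁻ x in s.J, g x) * (ENNReal.ofReal (1 / α) * (ENNReal.ofReal s.wt * s.S)) :=
        lintegral_mul_const _ hg
    _ ≤ (∫⁻ x in I α, g x) * (ENNReal.ofReal (1 / α) * (ENNReal.ofReal s.wt * s.S)) := by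
        gcongr
        exact s.subset
    _ = _ := by ring

/-- The density bound of incomplete pieces stays under control: old incomplete pieces are
contracted, and new ones are created by complete pieces, whose density is bounded by their mass. -/
lemma iterate_P_Ψ_le (h0 : 0 < α) (h1 : α ≤ 1) (n : ℕ) (s : Piece α) :
    (P h0)^[n] Ψ s ≤ s.Ψ + ENNReal.ofReal (120 / α ^ 4) * s.mass := by
  have hα2 : α ^ 2 ≤ 1 := by nlinarith
  have hθ0 : 0 ≤ θ α := by unfold θ; linarith
  have hθ1 : θ α ≤ 1 := by unfold θ; nlinarith
  induction n with
  | zero => exact le_self_add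
  | succ n ih =>
    have hstep : ∀ t : Piece α, P h0 Ψ t ≤
        ENNReal.ofReal (θ α) * t.Ψ + ENNReal.ofReal (θ α * (12 / α ^ 2)) * t.mass := fun t => by
      refine (t.P_Ψ_le h0 h1).trans ?_
      rw [ENNReal.ofReal_mul hθ0, ENNReal.ofReal_mul hθ0, mul_assoc, mul_assoc, ← mul_add]
      gcongr
      exact t.wt_mul_S_le h0 h1
    rw [Function.iterate_succ_apply]
    refine (iterate_P_mono h0 n hstep s).trans ?_
    rw [iterate_P_linear, iterate_P_mass h0 h1]
    calc ENNReal.ofReal (θ α) * (P h0)^[n] Ψ s + ENNReal.ofReal (θ α * (12 / α ^ 2)) * s.mass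
        ≤ ENNReal.ofReal (θ α) * (s.Ψ + ENNReal.ofReal (120 / α ^ 4) * s.mass)
          + ENNReal.ofReal (θ α * (12 / α ^ 2)) * s.mass := by gcongr
      _ = ENNReal.ofReal (θ α) * s.Ψ
          + ENNReal.ofReal (θ α * (120 / α ^ 4) + θ α * (12 / α ^ 2)) * s.mass := by
          rw [ENNReal.ofReal_add (by positivity) (by positivity), ENNReal.ofReal_mul hθ0,
            ENNReal.ofReal_mul hθ0]
          ring
      _ ≤ 1 * s.Ψ + ENNReal.ofReal (120 / α ^ 4) * s.mass := by
          gcongr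
          · rw [ENNReal.ofReal_le_one]; exact hθ1
          · have e : θ α * (120 / α ^ 4) + θ α * (12 / α ^ 2)
                = 120 / α ^ 4 - 12 / 10 := by
              unfold θ; field_simp; ring
            rw [e]; linarith
      _ = _ := by rw [one_mul]

/-- Lebesgue measure on an interval contained in the domain, as a piece. -/
def ofInterval (J : Set ℝ) (hJ : J.OrdConnected) (hs : J ⊆ I α) : Piece α where
  J := J
  ordConnected := hJ
  subset := hs
  q := 1
  r := 0
  r_nonneg := le_rfl
  r_le := zero_le_one
  q_pos := one_pos

lemma integ_ofInterval (J : Set ℝ) (hJ : J.OrdConnected) (hs : J ⊆ I α) (g : ℝ → ℝ≥0∞) :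
    integ g (ofInterval J hJ hs) = ∫⁻ x in J, g x := by
  simp [integ, ofInterval, dens]

/-- The images of Lebesgue measure under all iterates are uniformly dominated. -/
lemma volume_preimage_le (h0 : 0 < α) (h1 : α ≤ 1) {A : Set ℝ} (hA : MeasurableSet A) (n : ℕ) :
    volume.restrict (I α) ((nakadaT α)^[n] ⁻¹' A)
      ≤ ENNReal.ofReal (1 / α) * (ENNReal.ofReal (120 / α ^ 4) + ENNReal.ofReal (12 / α ^ 2))
        * volume.restrict (I α) A := by
  set s : Piece α := ofInterval (I α) (ordConnected_I α) Subset.rfl with hs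
  set g : ℝ → ℝ≥0∞ := A.indicator 1 with hg
  have hgm : Measurable g := measurable_one.indicator hA
  have hTn := (measurable_nakadaT α).iterate n
  have e1 : volume.restrict (I α) ((nakadaT α)^[n] ⁻¹' A) = integ (g ∘ (nakadaT α)^[n]) s := by
    rw [hs, integ_ofInterval, ← lintegral_indicator_one (hTn hA)]
    rfl
  have e2 : ∫⁻ x in I α, g x = volume.restrict (I α) A := lintegral_indicator_one hA
  have hmass : s.mass = 1 := by
    rw [mass, hs, integ_ofInterval]
    simp [I]
  have hΨ : s.Ψ = 0 := by
    have : s.Full := rfl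
    simp [Ψ, this]
  have hbound : ∀ t : Piece α, integ g t ≤
      ENNReal.ofReal (1 / α) * volume.restrict (I α) A * t.Ψ
      + ENNReal.ofReal (1 / α) * volume.restrict (I α) A * ENNReal.ofReal (12 / α ^ 2) * t.mass :=
    fun t => by
      refine (integ_le h0 g hgm t).trans ?_
      rw [e2, mul_assoc _ (ENNReal.ofReal (12 / α ^ 2)), ← mul_add]
      gcongr
      exact t.wt_mul_S_le h0 h1
  rw [e1, integ_comp_iterate h0 h1]
  refine (iterate_P_mono h0 n hbound s).trans ?_
  rw [iterate_P_linear, iterate_P_mass h0 h1, hmass]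
  have hit := iterate_P_Ψ_le h0 h1 n s
  rw [hΨ, hmass, zero_add, mul_one] at hit
  calc _ ≤ ENNReal.ofReal (1 / α) * volume.restrict (I α) A * ENNReal.ofReal (120 / α ^ 4)
        + ENNReal.ofReal (1 / α) * volume.restrict (I α) A * ENNReal.ofReal (12 / α ^ 2) * 1 := by
        gcongr
    _ = _ := by ring

lemma S_ne_top (h0 : 0 < α) (h1 : α ≤ 1) (s : Piece α) : s.S ≠ ∞ := by
  refine ne_top_of_le_ne_top (ENNReal.ofReal_ne_top (r := 2 * (1 / (α * s.q) ^ 2)))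
    (iSup₂_le fun x hx => ENNReal.ofReal_le_ofReal ?_)
  have hxI := s.subset hx
  have hd := s.dens_le h0 h1 hxI
  have hx1 : 0 ≤ 1 + x := by linarith [hxI.1]
  have hd0 : 0 ≤ s.dens x := by unfold dens; positivity
  gcongr
  linarith [hxI.2]

lemma Ψ_ne_top (h0 : 0 < α) (h1 : α ≤ 1) (s : Piece α) : s.Ψ ≠ ∞ := by
  unfold Ψ
  split_ifs
  · simp
  · exact ENNReal.mul_ne_top ENNReal.ofReal_ne_top (s.S_ne_top h0 h1)

/-- The constant in the lower bound for sets `A` with `T⁻¹ A ⊆ A`. -/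
def lowConst (α : ℝ) (A : Set ℝ) : ℝ≥0∞ :=
  ENNReal.ofReal (α ^ 2 / 4) * volume.restrict (I α) A

lemma lowConst_le_one (h0 : 0 < α) (h1 : α ≤ 1) (A : Set ℝ) : lowConst α A ≤ 1 := by
  have hv : volume.restrict (I α) A ≤ 1 := by
    refine (measure_mono (subset_univ A)).trans ?_
    simp [I]
  have ho : ENNReal.ofReal (α ^ 2 / 4) ≤ 1 := by
    rw [ENNReal.ofReal_le_one]; nlinarith
  exact mul_le_one' ho hv

lemma low_of_full (h0 : 0 < α) (h1 : α ≤ 1) {A : Set ℝ} (hA : MeasurableSet A) {s : Piece α}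
    (hf : s.Full) : lowConst α A * s.mass ≤ integ (A.indicator 1) s := by
  have hq := s.q_pos
  have hm : s.mass ≤ ENNReal.ofReal (1 / (α * s.q) ^ 2) := by
    have hI : volume s.J = 1 := by rw [hf, I, Real.volume_Ico]; simp
    calc s.mass ≤ ∫⁻ x in s.J, ENNReal.ofReal (1 / (α * s.q) ^ 2) := by
          refine setLIntegral_mono_ae' s.measurableSet_J (ae_of_all _ fun x hx => ?_)
          rw [one_mul]
          exact ENNReal.ofReal_le_ofReal (s.dens_le h0 h1 (s.subset hx))
      _ = _ := by simp [hI]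
  calc lowConst α A * s.mass
      ≤ lowConst α A * ENNReal.ofReal (1 / (α * s.q) ^ 2) := by gcongr
    _ = volume.restrict (I α) A * ENNReal.ofReal (1 / (2 * s.q) ^ 2) := by
        rw [lowConst, mul_right_comm, ← ENNReal.ofReal_mul (by positivity), mul_comm]
        congr 2
        field_simp
        norm_num
    _ = (∫⁻ x in s.J, A.indicator 1 x) * ENNReal.ofReal (1 / (2 * s.q) ^ 2) := by
        rw [hf, lintegral_indicator_one hA]
    _ = ∫⁻ x in s.J, A.indicator 1 x * ENNReal.ofReal (1 / (2 * s.q) ^ 2) :=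
        (lintegral_mul_const _ (measurable_one.indicator hA)).symm
    _ ≤ integ (A.indicator 1) s := by
        refine setLIntegral_mono_ae' s.measurableSet_J (ae_of_all _ fun x hx => ?_)
        gcongr
        exact s.le_dens h0 h1 (s.subset hx)

/-- A set with `T⁻¹ A ⊆ A` fills at least a fixed proportion of every piece, up to an error
carried by the parts of the piece that stay incomplete for `n` steps. -/
lemma low_approx (h0 : 0 < α) (h1 : α ≤ 1) {A : Set ℝ} (hA : MeasurableSet A)
    (hT : nakadaT α ⁻¹' A ⊆ A) (n : ℕ) (s : Piece α) :
    lowConst α A * s.mass ≤ integ (A.indicator 1) s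
      + ENNReal.ofReal (1 / α) * ENNReal.ofReal (θ α) ^ n * s.Ψ := by
  have hα2 : α ^ 2 ≤ 1 := by nlinarith
  have hθ0 : 0 ≤ θ α := by unfold θ; linarith
  induction n generalizing s with
  | zero =>
    by_cases hf : s.Full
    · exact (low_of_full h0 h1 hA hf).trans le_self_add
    · refine le_add_left ?_
      have h := integ_le h0 (fun _ => 1) measurable_const s
      have hI : volume (I α) = 1 := by rw [I, Real.volume_Ico]; simp
      calc lowConst α A * s.mass ≤ 1 * s.mass := by
            gcongr; exact lowConst_le_one h0 h1 A
        _ ≤ _ := by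
            rw [one_mul]
            simpa [mass, Ψ, hf, hI] using h
  | succ n ih =>
    by_cases hf : s.Full
    · exact (low_of_full h0 h1 hA hf).trans le_self_add
    · have hH : ∑' d, integ (A.indicator 1) (s.child h0 d) ≤ integ (A.indicator 1) s := by
        rw [← integ_comp h0 h1]
        refine lintegral_mono fun x => ?_
        gcongr
        exact indicator_le_indicator_of_subset hT (fun _ => zero_le_one) x
      have hM : s.mass = ∑' d, (s.child h0 d).mass := (congrFun (P_mass h0 h1) s).symm
      have hP := s.P_Ψ_le h0 h1
      calc lowConst α A * s.mass
          = ∑' d, lowConst α A * (s.child h0 d).mass := by rw [hM, ENNReal.tsum_mul_left]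
        _ ≤ ∑' d, (integ (A.indicator 1) (s.child h0 d)
            + ENNReal.ofReal (1 / α) * ENNReal.ofReal (θ α) ^ n * (s.child h0 d).Ψ) :=
            ENNReal.tsum_le_tsum fun d => ih _
        _ = ∑' d, integ (A.indicator 1) (s.child h0 d)
            + ENNReal.ofReal (1 / α) * ENNReal.ofReal (θ α) ^ n * P h0 Ψ s := by
            rw [ENNReal.tsum_add, ENNReal.tsum_mul_left, P]
        _ ≤ integ (A.indicator 1) s + ENNReal.ofReal (1 / α) * ENNReal.ofReal (θ α) ^ n *
            (ENNReal.ofReal (θ α * s.wt) * s.S) := by gcongr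
        _ = _ := by
            simp only [Ψ, hf, if_false]
            rw [ENNReal.ofReal_mul hθ0, pow_succ]
            ring

lemma low_bound (h0 : 0 < α) (h1 : α ≤ 1) {A : Set ℝ} (hA : MeasurableSet A)
    (hT : nakadaT α ⁻¹' A ⊆ A) (s : Piece α) :
    lowConst α A * s.mass ≤ integ (A.indicator 1) s := by
  have hθ : ENNReal.ofReal (θ α) < 1 := by
    rw [ENNReal.ofReal_lt_one]
    unfold θ
    have := pow_pos h0 2
    linarith
  have hl : Tendsto (fun n : ℕ => integ (A.indicator 1) s
      + ENNReal.ofReal (1 / α) * ENNReal.ofReal (θ α) ^ n * s.Ψ) atTop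
      (𝓝 (integ (A.indicator 1) s + ENNReal.ofReal (1 / α) * 0 * s.Ψ)) := by
    refine tendsto_const_nhds.add (ENNReal.Tendsto.mul_const
      (ENNReal.Tendsto.const_mul (ENNReal.tendsto_pow_atTop_nhds_zero_of_lt_one hθ)
        (Or.inr ENNReal.ofReal_ne_top)) (Or.inr (s.Ψ_ne_top h0 h1)))
  simpa using ge_of_tendsto' hl fun n => low_approx h0 h1 hA hT n s

end Piece

/-! ### Ergodicity and equivalence with Lebesgue measure -/

/-- A measurable set with `T⁻¹ A ⊆ A` has measure zero or full measure: otherwise its density is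
bounded below on all intervals, against Lebesgue's density theorem at points of `Aᶜ`. -/
lemma zero_or_full (h0 : 0 < α) (h1 : α ≤ 1) {A : Set ℝ} (hA : MeasurableSet A)
    (hT : nakadaT α ⁻¹' A ⊆ A) :
    volume.restrict (I α) A = 0 ∨ volume.restrict (I α) Aᶜ = 0 := by
  by_contra! hcon
  obtain ⟨hA0, hAc⟩ := hcon
  set m := volume.restrict (I α) with hm
  set c := Piece.lowConst α A with hc
  have hc0 : c ≠ 0 := by
    rw [hc, Piece.lowConst]
    refine mul_ne_zero ?_ hA0
    rw [Ne, ENNReal.ofReal_eq_zero, not_le]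
    positivity
  have hmI : m univ = 1 := by simp [hm, I]
  have : IsProbabilityMeasure m := ⟨hmI⟩
  have hball : ∀ x r, m (Aᶜ ∩ Metric.closedBall x r) / m (Metric.closedBall x r) ≤ 1 - c := by
    intro x r
    set B := Metric.closedBall x r with hB
    have hBm : MeasurableSet B := Metric.isClosed_closedBall.measurableSet
    have hBo : B.OrdConnected := by rw [hB, Real.closedBall_eq_Icc]; exact ordConnected_Icc
    have hlow := Piece.low_bound h0 h1 hA hT
      (Piece.ofInterval (B ∩ I α) (hBo.inter (ordConnected_I α)) inter_subset_right)
    have e1 : m B = volume (B ∩ I α) := Measure.restrict_apply hBm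
    have e2 : m (A ∩ B) = volume (A ∩ (B ∩ I α)) := by
      rw [hm, Measure.restrict_apply (hA.inter hBm), inter_assoc]
    rw [Piece.mass, Piece.integ_ofInterval, Piece.integ_ofInterval, lintegral_indicator_one hA,
      lintegral_one, Measure.restrict_apply_univ, Measure.restrict_apply hA, ← e1, ← e2] at hlow
    refine ENNReal.div_le_of_le_mul ?_
    rw [ENNReal.sub_mul (fun _ _ => measure_ne_top m B), one_mul]
    refine ENNReal.le_sub_of_add_le_left (ENNReal.mul_ne_top ?_ (measure_ne_top m B)) ?_
    · exact ne_top_of_le_ne_top ENNReal.one_ne_top (Piece.lowConst_le_one h0 h1 A)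
    · calc c * m B + m (Aᶜ ∩ B) ≤ m (A ∩ B) + m (Aᶜ ∩ B) := by gcongr
        _ = m B := by
          rw [inter_comm A, inter_comm Aᶜ, ← sdiff_eq]
          exact measure_inter_add_sdiff B hA
  have hdens := Besicovitch.ae_tendsto_measure_inter_div m Aᶜ
  have : (ae (m.restrict Aᶜ)).NeBot := by
    rw [ae_neBot, Ne, Measure.restrict_eq_zero]
    exact hAc
  obtain ⟨x, hx⟩ := hdens.exists
  have hle : (1 : ℝ≥0∞) ≤ 1 - c := le_of_tendsto' hx fun r => hball x r
  exact absurd hle (not_le.2 (ENNReal.sub_lt_self ENNReal.one_ne_top one_ne_zero hc0))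

end NakadaCF

open NakadaCF in
/-- For every `α ∈ (0,1]`, there is a Borel probability measure
`ν_α` on `[α-1, α)`, mutually absolutely continuous with Lebesgue measure on
`[α-1, α)`, which is preserved by Nakada's `α`-continued fraction map `T_α` and with
respect to which `T_α` is ergodic. -/
theorem stmt12 (α : ℝ) (hα : α ∈ Set.Ioc (0 : ℝ) 1) :
    ∃ ν : Measure ℝ, IsProbabilityMeasure ν ∧
      ν ≪ volume.restrict (Set.Ico (α - 1) α) ∧
      volume.restrict (Set.Ico (α - 1) α) ≪ ν ∧
      Ergodic (nakadaT α) ν := by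
  obtain ⟨h0, h1⟩ := hα
  have hprob : IsProbabilityMeasure (volume.restrict (Set.Ico (α - 1) α)) := ⟨by simp⟩
  have hTm := measurable_nakadaT α
  obtain ⟨ν, hν, hac, hpres⟩ := exists_invariant_of_bounded
    (volume.restrict (Set.Ico (α - 1) α)) hTm (by finiteness)
    (fun A hA n => Piece.volume_preimage_le h0 h1 hA n)
  refine ⟨ν, hν, hac, ?_, ⟨hpres, ⟨fun A hA hinv => ?_⟩⟩⟩
  · -- The union of all preimages of a `ν`-null set is `ν`-null, hence not of full measure.
    refine Measure.AbsolutelyContinuous.mk fun Z hZ hZ0 => ?_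
    have hk : ∀ k, MeasurableSet ((nakadaT α)^[k] ⁻¹' Z) := fun k => (hTm.iterate k) hZ
    have hν0 : ν (⋃ k, (nakadaT α)^[k] ⁻¹' Z) = 0 := by
      rw [measure_iUnion_null_iff]
      intro k
      rw [(hpres.iterate k).measure_preimage hZ.nullMeasurableSet, hZ0]
    have hsub : nakadaT α ⁻¹' (⋃ k, (nakadaT α)^[k] ⁻¹' Z) ⊆ ⋃ k, (nakadaT α)^[k] ⁻¹' Z := by
      rw [preimage_iUnion]
      refine iUnion_subset fun k => ?_
      rw [← preimage_comp, ← Function.iterate_succ]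
      exact subset_iUnion (fun k => (nakadaT α)^[k] ⁻¹' Z) (k + 1)
    rcases zero_or_full h0 h1 (MeasurableSet.iUnion hk) hsub with h | h
    · exact measure_mono_null (subset_iUnion (fun k => (nakadaT α)^[k] ⁻¹' Z) 0) h
    · have huniv : ν univ = 0 := by
        rw [← union_compl_self (⋃ k, (nakadaT α)^[k] ⁻¹' Z)]
        exact measure_union_null hν0 (hac h)
      simp at huniv
  · rw [Filter.eventuallyConst_set']
    rcases zero_or_full h0 h1 hA hinv.subset with h | h
    · exact Or.inl (ae_eq_empty.2 (hac h))
    · exact Or.inr (ae_eq_univ.2 (hac h))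
end
end

section
/- Let M = [[a,b],[c,d]] ∈ GL(2,ℝ) with det M = ±1, and define 𝒯_M(x,y) = (M·x, (R M R⁻¹)·y) = ((ax+b)/(cx+d), (dy−c)/(−by+a)) on the domain D_M = {(x,y) ∈ ℝ² : cx+d ≠ 0 and −by+a ≠ 0}. Then 𝒯_M preserves the measure μ with density (1+xy)^{−2}: for every Borel set E ⊆ D_M, μ(𝒯_M(E)) = μ(E). -/
/-! The claim is the change of variables formula for `𝒯_M`. Put `δ = det M = ±1`, `u = cx + d`
and `v = -by + a`. The coordinates of `𝒯_M` are Möbius maps of matrices of determinant `δ`, so they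
are injective off their poles (`moeb_inj`) and the Jacobian determinant of `𝒯_M` is
`(δ / u²)(δ / v²) = 1 / (uv)²` (`hasDerivAt_moeb`). On the other hand `1 + xy` is transformed into
`δ (1 + xy) / (uv)` (`one_add_moeb_mul`), so the density at the image point is
`(uv)² (1 + xy)⁻²`, and the two factors cancel. The identity also holds on the curve `1 + xy = 0`,
where both densities take the conventional value `0`. -/

open MeasureTheory Set

noncomputable section

/-- The Möbius action of a 2×2 real matrix `M = [[a,b],[c,d]]` on `ℝ`. -/
def moeb (M : Matrix (Fin 2) (Fin 2) ℝ) (x : ℝ) : ℝ :=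
  (M 0 0 * x + M 0 1) / (M 1 0 * x + M 1 1)

/-- The conjugate `R M R⁻¹` of `M = [[a,b],[c,d]]` by `R = [[0,-1],[1,0]]`:
equals `[[d,-c],[-b,a]]`. -/
def conjR (M : Matrix (Fin 2) (Fin 2) ℝ) : Matrix (Fin 2) (Fin 2) ℝ :=
  !![M 1 1, -(M 1 0); -(M 0 1), M 0 0]

/-- The planar map `𝒯_M (x,y) = (M·x, (R M R⁻¹)·y) = ((ax+b)/(cx+d), (dy-c)/(-by+a))`. -/
def planarM (M : Matrix (Fin 2) (Fin 2) ℝ) (p : ℝ × ℝ) : ℝ × ℝ :=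
  (moeb M p.1, moeb (conjR M) p.2)

/-- The Borel measure `dμ = dx dy / (1+xy)²` on the plane. -/
def muP : Measure (ℝ × ℝ) :=
  volume.withDensity fun p => ENNReal.ofReal (((1 + p.1 * p.2) ^ 2)⁻¹)

/-- The domain `D_M = {(x,y) : cx + d ≠ 0 and -by + a ≠ 0}` of `𝒯_M`. -/
def domM (M : Matrix (Fin 2) (Fin 2) ℝ) : Set (ℝ × ℝ) :=
  {p | M 1 0 * p.1 + M 1 1 ≠ 0 ∧ -(M 0 1) * p.2 + M 0 0 ≠ 0}

lemma hasDerivAt_moeb (M : Matrix (Fin 2) (Fin 2) ℝ) {x : ℝ} (h : M 1 0 * x + M 1 1 ≠ 0) :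
    HasDerivAt (moeb M) (M.det / (M 1 0 * x + M 1 1) ^ 2) x := by
  have h1 : HasDerivAt (fun x => M 0 0 * x + M 0 1) (M 0 0) x := by
    simpa using ((hasDerivAt_id x).const_mul (M 0 0)).add_const (M 0 1)
  have h2 : HasDerivAt (fun x => M 1 0 * x + M 1 1) (M 1 0) x := by
    simpa using ((hasDerivAt_id x).const_mul (M 1 0)).add_const (M 1 1)
  refine (h1.div h2 h).congr_deriv ?_
  rw [Matrix.det_fin_two]
  ring

lemma moeb_inj (M : Matrix (Fin 2) (Fin 2) ℝ) (hM : M.det ≠ 0) {x y : ℝ}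
    (hx : M 1 0 * x + M 1 1 ≠ 0) (hy : M 1 0 * y + M 1 1 ≠ 0) (h : moeb M x = moeb M y) :
    x = y := by
  rw [moeb, moeb, div_eq_div_iff hx hy] at h
  have : M.det * (x - y) = 0 := by
    rw [Matrix.det_fin_two]
    linear_combination h
  exact sub_eq_zero.mp ((mul_eq_zero.mp this).resolve_left hM)

lemma det_conjR (M : Matrix (Fin 2) (Fin 2) ℝ) : (conjR M).det = M.det := by
  simp only [conjR, Matrix.det_fin_two_of, Matrix.det_fin_two M]
  ring

lemma one_add_moeb_mul (M : Matrix (Fin 2) (Fin 2) ℝ) {p : ℝ × ℝ} (hp : p ∈ domM M) :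
    1 + moeb M p.1 * moeb (conjR M) p.2 =
      M.det * (1 + p.1 * p.2) / ((M 1 0 * p.1 + M 1 1) * (-(M 0 1) * p.2 + M 0 0)) := by
  obtain ⟨h1, h2⟩ := hp
  simp only [moeb, conjR, Matrix.of_apply, Matrix.cons_val', Matrix.cons_val_zero,
    Matrix.cons_val_one, Matrix.cons_val_fin_one]
  rw [Matrix.det_fin_two, div_mul_div_comm, eq_div_iff (mul_ne_zero h1 h2), add_mul,
    div_mul_cancel₀ _ (mul_ne_zero h1 h2)]
  ring

lemma det_prodMap_toSpanSingleton (r s : ℝ) :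
    ((ContinuousLinearMap.toSpanSingleton ℝ r).prodMap
      (ContinuousLinearMap.toSpanSingleton ℝ s)).det = r * s := by
  have h (t : ℝ) : (ContinuousLinearMap.toSpanSingleton ℝ t : ℝ →ₗ[ℝ] ℝ).det = t := by
    simp [LinearMap.det_ring]
  rw [ContinuousLinearMap.det, ContinuousLinearMap.coe_prodMap, LinearMap.det_prodMap, h, h]

/-- For `M ∈ GL(2,ℝ)` with `det M = ±1`, the map `𝒯_M` preserves
the measure `μ` with density `(1+xy)⁻²`: `μ(𝒯_M(E)) = μ(E)` for every Borel
`E ⊆ D_M`. -/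
theorem stmt14 (M : Matrix (Fin 2) (Fin 2) ℝ) (hdet : M.det = 1 ∨ M.det = -1)
    (E : Set (ℝ × ℝ)) (hE : MeasurableSet E) (hED : E ⊆ domM M) :
    muP (planarM M '' E) = muP E := by
  have hdet0 : M.det ≠ 0 := by rcases hdet with h | h <;> simp [h]
  have hdet2 : M.det ^ 2 = 1 := by rcases hdet with h | h <;> simp [h]
  have hconj (y : ℝ) : conjR M 1 0 * y + conjR M 1 1 = -(M 0 1) * y + M 0 0 := by simp [conjR]
  have hderiv : ∀ p ∈ E, HasFDerivWithinAt (planarM M)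
      ((ContinuousLinearMap.toSpanSingleton ℝ (M.det / (M 1 0 * p.1 + M 1 1) ^ 2)).prodMap
        (ContinuousLinearMap.toSpanSingleton ℝ (M.det / (-(M 0 1) * p.2 + M 0 0) ^ 2))) E p := by
    intro p hp
    have h1 := hasDerivAt_moeb M (hED hp).1
    have h2 := hasDerivAt_moeb (conjR M) (x := p.2) (by rw [hconj]; exact (hED hp).2)
    rw [det_conjR, hconj] at h2
    exact (HasFDerivAt.prodMap p h1.hasFDerivAt h2.hasFDerivAt).hasFDerivWithinAt
  have hinj : InjOn (planarM M) E := by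
    intro p hp q hq h
    obtain ⟨h1, h2⟩ := Prod.ext_iff.mp h
    refine Prod.ext (moeb_inj M hdet0 (hED hp).1 (hED hq).1 h1)
      (moeb_inj (conjR M) (by rwa [det_conjR]) ?_ ?_ h2)
    · rw [hconj]; exact (hED hp).2
    · rw [hconj]; exact (hED hq).2
  have himg : MeasurableSet (planarM M '' E) := measurable_image_of_fderivWithin hE hderiv hinj
  rw [muP, withDensity_apply _ himg, withDensity_apply _ hE,
    lintegral_image_eq_lintegral_abs_det_fderiv_mul volume hE hderiv hinj]
  refine setLIntegral_congr_fun hE fun p hp => ?_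
  have hu := (hED hp).1
  have hv := (hED hp).2
  rw [det_prodMap_toSpanSingleton, ← ENNReal.ofReal_mul (abs_nonneg _)]
  congr 1
  rw [show (planarM M p).1 * (planarM M p).2 = moeb M p.1 * moeb (conjR M) p.2 from rfl,
    one_add_moeb_mul M (hED hp), div_mul_div_comm, ← sq, hdet2, div_pow, mul_pow, hdet2, one_mul,
    inv_div, abs_of_nonneg (by positivity), mul_pow]
  generalize -(M 0 1) * p.2 + M 0 0 = v at hv ⊢
  field_simp
end
end
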